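/- Define g_{1,5}(τ) = g_{(2/5,0)}(5τ)⁵ · g_{(1/5,0)}(5τ)⁻⁵ for τ ∈ ℍ. Then the ring O_{1,5}(ℚ) of weakly holomorphic modular functions for Γ₁(5) with rational Fourier coefficients equals ℚ[g_{1,5}, g_{1,5}⁻¹, (g_{1,5}² − 11 g_{1,5} − 1)⁻¹]; that is, g_{1,5}, its reciprocal, and (g_{1,5}² − 11 g_{1,5} − 1)⁻¹ lie in O_{1,5}(ℚ), and every element of O_{1,5}(ℚ) is a polynomial in these three functions with rational coefficients. -/

import Mathlib

open Complex UpperHalfPlane Matrix MatrixGroups CongruenceSubgroup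
open scoped UpperHalfPlane Manifold Real

noncomputable section

/-- `N·τ` as a point of the upper half-plane (junk value `τ` if `N = 0`). -/
def hsmul (N : ℕ) (τ : UpperHalfPlane) : UpperHalfPlane :=
  if hN : 0 < N then
    ⟨(N : ℂ) * τ, by
      have h0 : (0 : ℝ) < (N : ℝ) := by exact_mod_cast hN
      simpa [Complex.mul_im] using mul_pos h0 τ.2⟩
  else τ

/-- The Siegel function `g_r(τ)` given by its infinite product expansion. -/
def siegel (r : ℚ × ℚ) (τ : ℍ) : ℂ :=
  -Complex.exp ((Real.pi : ℂ) * Complex.I * (((r.1 : ℂ) ^ 2 - (r.1 : ℂ) + 1 / 6) * τ)) *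
    Complex.exp ((Real.pi : ℂ) * Complex.I * (r.2 : ℂ) * ((r.1 : ℂ) - 1)) *
    (1 - Complex.exp (2 * (Real.pi : ℂ) * Complex.I * ((r.1 : ℂ) * τ + (r.2 : ℂ)))) *
    ∏' n : ℕ,
      ((1 - Complex.exp (2 * (Real.pi : ℂ) * Complex.I *
          (((n : ℂ) + 1 + (r.1 : ℂ)) * τ + (r.2 : ℂ)))) *
       (1 - Complex.exp (2 * (Real.pi : ℂ) * Complex.I *
          (((n : ℂ) + 1 - (r.1 : ℂ)) * τ - (r.2 : ℂ)))))

/-- The lattice point `ω = m·τ + n` attached to a pair `(m,n) ∈ ℤ²`. -/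
def lat (τ : ℍ) (p : ℤ × ℤ) : ℂ := (p.1 : ℂ) * τ + (p.2 : ℂ)

/-- `g₂(τ) = 60 ∑_{ω ∈ L_τ ∖ {0}} ω⁻⁴`. -/
def g2C (τ : ℍ) : ℂ := 60 * ∑' p : {p : ℤ × ℤ // p ≠ 0}, ((lat τ p.1) ^ 4)⁻¹

/-- `g₃(τ) = 140 ∑_{ω ∈ L_τ ∖ {0}} ω⁻⁶`. -/
def g3C (τ : ℍ) : ℂ := 140 * ∑' p : {p : ℤ × ℤ // p ≠ 0}, ((lat τ p.1) ^ 6)⁻¹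

/-- The discriminant `Δ(τ) = g₂(τ)³ - 27 g₃(τ)²`. -/
def discC (τ : ℍ) : ℂ := g2C τ ^ 3 - 27 * g3C τ ^ 2

/-- The Weierstrass `℘`-function relative to the lattice `L_τ = ℤτ + ℤ`. -/
def wpC (z : ℂ) (τ : ℍ) : ℂ :=
  (z ^ 2)⁻¹ + ∑' p : {p : ℤ × ℤ // p ≠ 0}, (((z - lat τ p.1) ^ 2)⁻¹ - ((lat τ p.1) ^ 2)⁻¹)

/-- The Fricke function `f_r(τ)`. -/
def fricke (r : ℚ × ℚ) (τ : ℍ) : ℂ :=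
  -(2 ^ 7 * 3 ^ 5) * (g2C τ * g3C τ / discC τ) * wpC ((r.1 : ℂ) * τ + (r.2 : ℂ)) τ

/-- The elliptic modular `j`-invariant. -/
def jinv (τ : ℍ) : ℂ := 1728 * g2C τ ^ 3 / discC τ

/-- The Dedekind eta function. -/
def etaC (τ : ℍ) : ℂ :=
  (Real.sqrt (2 * Real.pi) : ℂ) * Complex.exp (2 * (Real.pi : ℂ) * Complex.I / 16) *
    Complex.exp (2 * (Real.pi : ℂ) * Complex.I * τ / 24) *
    ∏' n : ℕ, (1 - Complex.exp (2 * (Real.pi : ℂ) * Complex.I * ((n : ℂ) + 1) * τ))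

/-- `r ∈ ℚ² ∖ ℤ²`. -/
def NonIntegral (r : ℚ × ℚ) : Prop := ¬ ∃ a b : ℤ, r = ((a : ℚ), (b : ℚ))

/-- `r ∈ (1/N)ℤ²`. -/
def InDen (N : ℕ) (r : ℚ × ℚ) : Prop := ∃ a b : ℤ, r = ((a : ℚ) / N, (b : ℚ) / N)

/-- Membership in `Γ^1(N)`: `a ≡ d ≡ 1` and `b ≡ 0 (mod N)`. -/
def GammaUpper (N : ℕ) (γ : SL(2, ℤ)) : Prop :=
  ((γ 0 0 : ℤ) : ZMod N) = 1 ∧ ((γ 1 1 : ℤ) : ZMod N) = 1 ∧ ((γ 0 1 : ℤ) : ZMod N) = 0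

/-- The transpose action `ᵗγ r = (a r₁ + c r₂, b r₁ + d r₂)` of `γ = [[a,b],[c,d]]`. -/
def tAct (γ : SL(2, ℤ)) (r : ℚ × ℚ) : ℚ × ℚ :=
  ((γ 0 0 : ℚ) * r.1 + (γ 1 0 : ℚ) * r.2, (γ 0 1 : ℚ) * r.1 + (γ 1 1 : ℚ) * r.2)

/-- The power `q^{n/d} = e^{2πi(n/d)τ}`. -/
def qpow (d : ℕ) (n : ℤ) (τ : ℍ) : ℂ :=
  Complex.exp (2 * (Real.pi : ℂ) * Complex.I * ((n : ℂ) / (d : ℂ)) * τ)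

/-- `h` is a weakly holomorphic modular function for `Γ₁(N)` with rational
Fourier coefficients: holomorphic on `ℍ`, `Γ₁(N)`-invariant, with a convergent
`q`-expansion at `i∞` having rational coefficients, and meromorphic at every cusp. -/
def IsWeaklyHolo1 (N : ℕ) (h : ℍ → ℂ) : Prop :=
  MDifferentiable 𝓘(ℂ) 𝓘(ℂ) h ∧
  (∀ γ ∈ Gamma1 N, ∀ τ : ℍ, h (γ • τ) = h τ) ∧
  (∃ n₀ : ℤ, ∃ c : ℕ → ℚ,
    ∀ τ : ℍ, HasSum (fun n : ℕ => (c n : ℂ) * qpow 1 (n₀ + n) τ) (h τ)) ∧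
  (∀ γ : SL(2, ℤ), ∃ n₀ : ℤ, ∃ c : ℕ → ℂ,
    ∀ τ : ℍ, HasSum (fun n : ℕ => c n * qpow N (n₀ + n) τ) (h (γ • τ)))

/-- `h` is a weakly holomorphic modular function for `Γ^1(N)` with rational
Fourier coefficients (the expansion at `i∞` being in powers of `q^{1/N}`). -/
def IsWeaklyHoloUp (N : ℕ) (h : ℍ → ℂ) : Prop :=
  MDifferentiable 𝓘(ℂ) 𝓘(ℂ) h ∧
  (∀ γ : SL(2, ℤ), GammaUpper N γ → ∀ τ : ℍ, h (γ • τ) = h τ) ∧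
  (∃ n₀ : ℤ, ∃ c : ℕ → ℚ,
    ∀ τ : ℍ, HasSum (fun n : ℕ => (c n : ℂ) * qpow N (n₀ + n) τ) (h τ)) ∧
  (∀ γ : SL(2, ℤ), ∃ n₀ : ℤ, ∃ c : ℕ → ℂ,
    ∀ τ : ℍ, HasSum (fun n : ℕ => c n * qpow N (n₀ + n) τ) (h (γ • τ)))

/-- The Weierstrass-unit generator
`f^1_{m,N} = (f_{(1/N,0)} - f_{(1/m,0)})/(f_{(2/m,0)} - f_{(1/m,0)})`. -/
def fUnit (m N : ℕ) (τ : ℍ) : ℂ :=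
  (fricke ((1 : ℚ) / N, 0) τ - fricke ((1 : ℚ) / m, 0) τ) /
    (fricke ((2 : ℚ) / m, 0) τ - fricke ((1 : ℚ) / m, 0) τ)

/-- `g_{1,5}(τ) = g_{(2/5,0)}(5τ)⁵ · g_{(1/5,0)}(5τ)⁻⁵`. -/
def gOne5 (τ : ℍ) : ℂ :=
  siegel ((2 : ℚ) / 5, 0) (hsmul 5 τ) ^ 5 * (siegel ((1 : ℚ) / 5, 0) (hsmul 5 τ) ^ 5)⁻¹

/-!
By the Jacobi triple product, `g = g_{1,5}` is a quotient of theta series. This gives its expansion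
`q⁻¹ (1 + ⋯)` with rational coefficients and its behaviour under `SL(2, ℤ)`. On `X₁(5)`, which has
the four cusps `∞`, `2/5`, `0` and `1/2`, the divisor of `g` is `(2/5) - (∞)`. A matrix sending `∞`
to `2/5` acts by `g ↦ -1/g`, and at the cusp `0` the value of `g` is `((1 + √5)/2)⁵`, a root of
`X² - 11 X - 1`. Hence `u = g² - 11 g - 1` vanishes at the cusps `0` and `1/2`. The invariant
function `(u / g)⁴ Δ(5τ) / Δ(τ)` is holomorphic on `ℍ` and bounded at every cusp, so it is constant
and `u` has no zeros on `ℍ`.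

For a weakly holomorphic `h` and large `m`, the only pole of `h (u g)ᵐ` is at `∞`. Subtracting a
rational polynomial in `g` removes its principal part there, and what remains is bounded at every
cusp, hence a rational constant.
-/

local notation "𝕢" => Function.Periodic.qParam

/-! ### The Jacobi triple product -/

section JacobiTriple

/-- The finite `q`-Pochhammer symbol `(q; q)_m`. -/
def qPoch (q : ℂ) (m : ℕ) : ℂ := ∏ i ∈ Finset.range m, (1 - q ^ (i + 1))

/-- The reciprocal `1 / (q; q)_m`, extended by zero to negative `m`, so that its recursion in `m`
holds for all integers. -/
def qPochInv (q : ℂ) (m : ℤ) : ℂ := if m < 0 then 0 else (qPoch q m.toNat)⁻¹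

/-- The `n`-th term of the finite form of the Jacobi triple product: the Gaussian binomial
coefficient `[2N, N + n]_q` times `q ^ (n(n-1)/2) * (-w) ^ n`. -/
def finiteTripleTerm (q w : ℂ) (N : ℕ) (n : ℤ) : ℂ :=
  qPoch q (2 * N) * qPochInv q (N + n) * qPochInv q (N - n) * (q ^ (n * (n - 1) / 2) * (-w) ^ n)

variable {q w : ℂ}

lemma one_sub_pow_succ_ne_zero (hq : ‖q‖ < 1) (i : ℕ) : 1 - q ^ (i + 1) ≠ 0 := by
  intro h
  have hlt : ‖q‖ ^ (i + 1) < 1 := pow_lt_one₀ (norm_nonneg _) hq (Nat.succ_ne_zero i)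
  rw [← norm_pow, ← sub_eq_zero.mp h, norm_one] at hlt
  exact lt_irrefl _ hlt

lemma qPoch_succ (q : ℂ) (m : ℕ) : qPoch q (m + 1) = qPoch q m * (1 - q ^ (m + 1)) :=
  Finset.prod_range_succ _ _

lemma qPoch_ne_zero (hq : ‖q‖ < 1) (m : ℕ) : qPoch q m ≠ 0 :=
  Finset.prod_ne_zero_iff.mpr fun i _ => one_sub_pow_succ_ne_zero hq i

lemma qPochInv_of_neg {m : ℤ} (hm : m < 0) : qPochInv q m = 0 := if_pos hm

lemma qPochInv_natCast (q : ℂ) (m : ℕ) : qPochInv q m = (qPoch q m)⁻¹ := by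
  simp [qPochInv]

lemma qPochInv_sub_one (hq : ‖q‖ < 1) (m : ℤ) :
    qPochInv q (m - 1) = (1 - q ^ m) * qPochInv q m := by
  rcases lt_trichotomy m 0 with hm | rfl | hm
  · rw [qPochInv_of_neg hm, qPochInv_of_neg (by omega), mul_zero]
  · rw [qPochInv_of_neg (by omega), zpow_zero, sub_self, zero_mul]
  · obtain ⟨k, rfl⟩ : ∃ k : ℕ, m = (k + 1 : ℕ) := ⟨(m - 1).toNat, by omega⟩
    have hk := one_sub_pow_succ_ne_zero hq k
    have hP := qPoch_ne_zero hq k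
    rw [show ((k + 1 : ℕ) : ℤ) - 1 = k by push_cast; ring, qPochInv_natCast, qPochInv_natCast,
      qPoch_succ, zpow_natCast]
    field_simp

lemma zpow_triangular_succ (hq0 : q ≠ 0) (n : ℤ) :
    q ^ ((n + 1) * n / 2) = q ^ n * q ^ (n * (n - 1) / 2) := by
  rw [← zpow_add₀ hq0]
  congr 1
  obtain ⟨k, hk⟩ := Int.even_mul_pred_self n
  have h₁ : n * (n - 1) / 2 = k := by omega
  have h₂ : (n + 1) * n = 2 * (n + k) := by linear_combination hk
  omega

lemma finiteTripleTerm_zero (q w : ℂ) (n : ℤ) :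
    finiteTripleTerm q w 0 n = if n = 0 then 1 else 0 := by
  rcases lt_trichotomy n 0 with hn | rfl | hn
  · simp [finiteTripleTerm, qPochInv_of_neg hn, hn.ne]
  · simp [finiteTripleTerm, qPoch, qPochInv]
  · simp [finiteTripleTerm, qPochInv_of_neg (neg_neg_of_pos hn), hn.ne']

lemma finiteTripleTerm_succ (hq : ‖q‖ < 1) (hq0 : q ≠ 0) (hw : w ≠ 0) (N : ℕ) (n : ℤ) :
    finiteTripleTerm q w (N + 1) n = (1 + q ^ (2 * N + 1)) * finiteTripleTerm q w N n +
      -q ^ N * w * finiteTripleTerm q w N (n - 1) +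
      -q ^ (N + 1) * w⁻¹ * finiteTripleTerm q w N (n + 1) := by
  have hnw : -w ≠ 0 := neg_ne_zero.mpr hw
  have hadd : qPochInv q (N + n) = (1 - q ^ ((N : ℤ) + 1 + n)) * qPochInv q (N + 1 + n) := by
    rw [← qPochInv_sub_one hq]; ring_nf
  have hsub : qPochInv q (N - n) = (1 - q ^ ((N : ℤ) + 1 - n)) * qPochInv q (N + 1 - n) := by
    rw [← qPochInv_sub_one hq]; ring_nf
  have hadd' : qPochInv q (N + (n - 1)) = (1 - q ^ ((N : ℤ) + n)) * qPochInv q (N + n) := by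
    rw [← qPochInv_sub_one hq]; ring_nf
  have hsub' : qPochInv q (N - (n + 1)) = (1 - q ^ ((N : ℤ) - n)) * qPochInv q (N - n) := by
    rw [← qPochInv_sub_one hq]; ring_nf
  have hpoch : qPoch q (2 * (N + 1)) =
      qPoch q (2 * N) * (1 - q ^ (2 * N + 1)) * (1 - q ^ (2 * N + 2)) := by
    rw [mul_add_one, qPoch_succ, qPoch_succ]
  have ht : q ^ (n * (n - 1) / 2) = q ^ (n - 1) * q ^ ((n - 1) * (n - 2) / 2) := by
    have := zpow_triangular_succ hq0 (n - 1)
    rwa [sub_add_cancel, sub_sub, one_add_one_eq_two] at this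
  have hs : q ^ n ≠ 0 := zpow_ne_zero _ hq0
  unfold finiteTripleTerm
  rw [hadd', hsub', show (N : ℤ) - (n - 1) = N + 1 - n by ring,
    show (N : ℤ) + (n + 1) = N + 1 + n by ring, hadd, hsub, hpoch, add_sub_cancel_right,
    zpow_triangular_succ hq0, show n - 1 - 1 = n - 2 by ring, ht, zpow_add₀ hnw, zpow_sub₀ hnw,
    Nat.cast_succ]
  simp only [zpow_add₀ hq0, zpow_sub₀ hq0, zpow_natCast, zpow_one, pow_add, pow_mul', pow_one]
  field_simp
  ring

lemma hasSum_finiteTripleTerm (hq : ‖q‖ < 1) (hq0 : q ≠ 0) (hw : w ≠ 0) (N : ℕ) :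
    HasSum (finiteTripleTerm q w N)
      (∏ k ∈ Finset.range N, ((1 - q ^ k * w) * (1 - q ^ (k + 1) * w⁻¹))) := by
  induction N with
  | zero =>
    simp only [Finset.range_zero, Finset.prod_empty]
    exact (hasSum_ite_eq (0 : ℤ) (1 : ℂ)).congr_fun (finiteTripleTerm_zero q w)
  | succ N ih =>
    have hprev := ((Equiv.subRight (1 : ℤ)).hasSum_iff.mpr ih).mul_left (-q ^ N * w)
    have hnext := ((Equiv.addRight (1 : ℤ)).hasSum_iff.mpr ih).mul_left (-q ^ (N + 1) * w⁻¹)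
    have hrec := ((ih.mul_left (1 + q ^ (2 * N + 1))).add hprev).add hnext
    have hfactor (P : ℂ) : P * ((1 - q ^ N * w) * (1 - q ^ (N + 1) * w⁻¹)) =
        (1 + q ^ (2 * N + 1)) * P + -q ^ N * w * P + -q ^ (N + 1) * w⁻¹ * P := by
      field_simp
      ring
    rw [Finset.prod_range_succ, hfactor]
    exact hrec.congr_fun (finiteTripleTerm_succ hq hq0 hw N)

lemma summable_norm_pow_succ_mul (hq : ‖q‖ < 1) (w : ℂ) :
    Summable fun n : ℕ => ‖-(q ^ (n + 1) * w)‖ := by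
  refine ((summable_geometric_of_lt_one (norm_nonneg q) hq).mul_right (‖q‖ * ‖w‖)).congr
    fun n => ?_
  rw [norm_neg, norm_mul, norm_pow, pow_succ, mul_assoc]

lemma multipliable_one_sub_pow_succ_mul (hq : ‖q‖ < 1) (w : ℂ) :
    Multipliable fun n : ℕ => 1 - q ^ (n + 1) * w := by
  simpa only [sub_eq_add_neg] using
    multipliable_one_add_of_summable (summable_norm_pow_succ_mul hq w)

lemma tendsto_qPoch (hq : ‖q‖ < 1) :
    Filter.Tendsto (qPoch q) Filter.atTop (nhds (∏' n : ℕ, (1 - q ^ (n + 1)))) := by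
  have h := (multipliable_one_sub_pow_succ_mul hq 1).tendsto_prod_tprod_nat
  simp only [mul_one] at h
  exact h

lemma tprod_one_sub_pow_succ_mul_ne_zero (hq : ‖q‖ < 1) {w : ℂ}
    (hw : ∀ n : ℕ, 1 - q ^ (n + 1) * w ≠ 0) : ∏' n : ℕ, (1 - q ^ (n + 1) * w) ≠ 0 := by
  simp only [sub_eq_add_neg] at hw ⊢
  exact tprod_one_add_ne_zero_of_summable hw (summable_norm_pow_succ_mul hq w)

lemma tprod_one_sub_pow_succ_ne_zero (hq : ‖q‖ < 1) : ∏' n : ℕ, (1 - q ^ (n + 1)) ≠ 0 := by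
  simpa only [mul_one] using tprod_one_sub_pow_succ_mul_ne_zero hq (w := 1) fun n => by
    simpa only [mul_one] using one_sub_pow_succ_ne_zero hq n

lemma tendsto_qPochInv_atTop (hq : ‖q‖ < 1) :
    Filter.Tendsto (qPochInv q) Filter.atTop (nhds (∏' n : ℕ, (1 - q ^ (n + 1)))⁻¹) := by
  have h := (tendsto_qPoch hq).inv₀ (tprod_one_sub_pow_succ_ne_zero hq)
  rw [← Nat.map_cast_int_atTop, Filter.tendsto_map'_iff]
  exact h.congr fun n => (qPochInv_natCast q n).symm

lemma exists_norm_qPoch_le (hq : ‖q‖ < 1) : ∃ B : ℝ, ∀ m, ‖qPoch q m‖ ≤ B := by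
  obtain ⟨B, hB⟩ := (tendsto_qPoch hq).norm.bddAbove_range
  exact ⟨B, fun m => hB ⟨m, rfl⟩⟩

lemma exists_norm_qPochInv_le (hq : ‖q‖ < 1) : ∃ B : ℝ, ∀ m, ‖qPochInv q m‖ ≤ B := by
  obtain ⟨B, hB⟩ :=
    ((tendsto_qPoch hq).inv₀ (tprod_one_sub_pow_succ_ne_zero hq)).norm.bddAbove_range
  refine ⟨max B 0, fun m => ?_⟩
  unfold qPochInv
  split_ifs
  · rw [norm_zero]; exact le_max_right _ _
  · exact le_max_of_le_left (hB ⟨_, rfl⟩)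

lemma summable_zpow_triangular_mul_neg_zpow (hq : ‖q‖ < 1) (hq0 : q ≠ 0) (hw : w ≠ 0) :
    Summable fun n : ℤ => q ^ (n * (n - 1) / 2) * (-w) ^ n := by
  set τ := Function.Periodic.invQParam 1 q
  set z := Function.Periodic.invQParam 1 (-w)
  have hτ : cexp (2 * π * Complex.I * τ) = q := by
    simpa [Function.Periodic.qParam] using Function.Periodic.qParam_right_inv one_ne_zero hq0
  have hz : cexp (2 * π * Complex.I * z) = -w := by
    simpa [Function.Periodic.qParam] using
      Function.Periodic.qParam_right_inv one_ne_zero (neg_ne_zero.mpr hw)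
  have him : 0 < τ.im :=
    Function.Periodic.im_invQParam_pos_of_norm_lt_one one_pos hq hq0
  refine ((summable_jacobiTheta₂_term_iff (z - τ / 2) τ).mpr him).congr fun n => ?_
  have htri : (((n * (n - 1) / 2 : ℤ) : ℂ)) * 2 = n * (n - 1) := by
    exact_mod_cast Int.ediv_mul_cancel (Int.even_mul_pred_self n).two_dvd
  rw [← hz, ← hτ, ← Complex.exp_int_mul, ← Complex.exp_int_mul, ← Complex.exp_add,
    jacobiTheta₂_term]
  congr 1
  linear_combination -(π * Complex.I * τ) * htri

lemma tendsto_tsum_finiteTripleTerm (hq : ‖q‖ < 1) (hq0 : q ≠ 0) (hw : w ≠ 0) :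
    Filter.Tendsto (fun N : ℕ => ∑' n : ℤ, finiteTripleTerm q w N n) Filter.atTop
      (nhds ((∏' n : ℕ, (1 - q ^ (n + 1)))⁻¹ * ∑' n : ℤ, q ^ (n * (n - 1) / 2) * (-w) ^ n)) := by
  set E := ∏' n : ℕ, (1 - q ^ (n + 1))
  have hE : E * E⁻¹ * E⁻¹ = E⁻¹ := by
    rw [mul_inv_cancel₀ (tprod_one_sub_pow_succ_ne_zero hq), one_mul]
  obtain ⟨B, hB⟩ := exists_norm_qPoch_le hq
  obtain ⟨B', hB'⟩ := exists_norm_qPochInv_le hq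
  have hB'0 : 0 ≤ B' := (norm_nonneg _).trans (hB' 0)
  rw [← tsum_mul_left, ← hE]
  refine tendsto_tsum_of_dominated_convergence
    ((summable_zpow_triangular_mul_neg_zpow hq hq0 hw).norm.mul_left (B * B' * B'))
    (fun n => ?_) (Filter.Eventually.of_forall fun N n => ?_)
  · have hpoch := (tendsto_qPoch hq).comp (Filter.tendsto_id.const_mul_atTop' two_pos)
    have hinv (k : ℤ) := (tendsto_qPochInv_atTop hq).comp
      (Filter.tendsto_atTop_add_const_right _ k tendsto_natCast_atTop_atTop)
    exact ((hpoch.mul (hinv n)).mul (hinv (-n))).mul_const _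
  · rw [finiteTripleTerm, norm_mul, norm_mul, norm_mul]
    have hB0 : 0 ≤ B := (norm_nonneg _).trans (hB 0)
    gcongr
    exacts [hB _, hB' _, hB' _]

theorem jacobi_triple_product (hq : ‖q‖ < 1) (hq0 : q ≠ 0) (hw : w ≠ 0) :
    (1 - w) * ∏' n : ℕ, ((1 - q ^ (n + 1) * w) * (1 - q ^ (n + 1) * w⁻¹)) =
      (∏' n : ℕ, (1 - q ^ (n + 1)))⁻¹ * ∑' n : ℤ, q ^ (n * (n - 1) / 2) * (-w) ^ n := by
  have hprod := (((multipliable_one_sub_pow_succ_mul hq w).mul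
    (multipliable_one_sub_pow_succ_mul hq w⁻¹)).tendsto_prod_tprod_nat).const_mul (1 - w)
  have hlast : Filter.Tendsto (fun N : ℕ => 1 - q ^ N * w) Filter.atTop (nhds (1 - 0 * w)) :=
    ((tendsto_pow_atTop_nhds_zero_of_norm_lt_one hq).mul_const w).const_sub 1
  have hsum := hlast.mul (tendsto_tsum_finiteTripleTerm hq hq0 hw)
  rw [zero_mul, sub_zero, one_mul] at hsum
  refine tendsto_nhds_unique (hprod.congr fun N => ?_) hsum
  have hshift := Finset.prod_range_succ' (fun k => 1 - q ^ k * w) N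
  rw [Finset.prod_range_succ, pow_zero, one_mul] at hshift
  rw [(hasSum_finiteTripleTerm hq hq0 hw N).tsum_eq, Finset.prod_mul_distrib,
    Finset.prod_mul_distrib]
  linear_combination -(∏ n ∈ Finset.range N, (1 - q ^ (n + 1) * w⁻¹)) * hshift

end JacobiTriple

/-! ### Klein forms -/

section Klein

/-- The Klein form of characteristic `(x, y)` as a theta series. It is normalised without the
factor `η(τ)⁻³` of the classical Klein form, which does not depend on `(x, y)` and cancels in
quotients. -/
def klein (x y τ : ℂ) : ℂ :=
  ∑' n : ℤ, cexp (π * Complex.I *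
    ((n + 1 / 2 + x) ^ 2 * τ + (2 * n + 1) * (y + 1 / 2) + x * y))

lemma exp_pi_I_mul_intCast (n : ℤ) : cexp (π * Complex.I * n) = (-1) ^ n := by
  rw [mul_comm, Complex.exp_int_mul, Complex.exp_pi_mul_I]

lemma klein_eq_jacobiTheta₂ (x y τ : ℂ) :
    klein x y τ = cexp (π * Complex.I * ((x + 1 / 2) ^ 2 * τ + (y + 1 / 2) + x * y)) *
      jacobiTheta₂ ((x + 1 / 2) * τ + (y + 1 / 2)) τ := by
  rw [klein, jacobiTheta₂, ← tsum_mul_left]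
  refine tsum_congr fun n => ?_
  rw [jacobiTheta₂_term, ← Complex.exp_add]
  ring_nf

lemma klein_add_intCast_left (x y τ : ℂ) (m : ℤ) :
    klein (x + m) y τ = (-1) ^ m * cexp (-(π * Complex.I * (m * y))) * klein x y τ := by
  rw [klein, klein, ← (Equiv.subRight m).tsum_eq, ← tsum_mul_left]
  refine tsum_congr fun n => ?_
  rw [← exp_pi_I_mul_intCast, ← Complex.exp_add, ← Complex.exp_add,
    Complex.exp_eq_exp_iff_exists_int]
  exact ⟨-m, by simp only [Equiv.subRight_apply]; push_cast; ring⟩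

lemma klein_add_intCast_right (x y τ : ℂ) (m : ℤ) :
    klein x (y + m) τ = (-1) ^ m * cexp (π * Complex.I * (m * x)) * klein x y τ := by
  rw [klein, klein, ← tsum_mul_left]
  refine tsum_congr fun n => ?_
  rw [← exp_pi_I_mul_intCast, ← Complex.exp_add, ← Complex.exp_add,
    Complex.exp_eq_exp_iff_exists_int]
  exact ⟨n * m, by push_cast; ring⟩

lemma klein_add_intCast (x y τ : ℂ) (m n : ℤ) :
    klein (x + m) (y + n) τ =
      (-1) ^ (m * n + m + n) * cexp (π * Complex.I * (n * x - m * y)) * klein x y τ := by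
  rw [klein_add_intCast_left, klein_add_intCast_right]
  simp only [← exp_pi_I_mul_intCast, ← mul_assoc, ← Complex.exp_add]
  congr 1
  rw [Complex.exp_eq_exp_iff_exists_int]
  exact ⟨-m * n, by push_cast; ring⟩

lemma klein_neg (x y τ : ℂ) : klein (-x) (-y) τ = -klein x y τ := by
  rw [klein, klein, ← (Equiv.subLeft (-1 : ℤ)).tsum_eq, ← tsum_neg]
  refine tsum_congr fun n => ?_
  rw [neg_eq_neg_one_mul (cexp _), ← Complex.exp_pi_mul_I, ← Complex.exp_add,
    Complex.exp_eq_exp_iff_exists_int]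
  exact ⟨-n - 1, by simp only [Equiv.subLeft_apply]; push_cast; ring⟩

lemma klein_add_one (x y τ : ℂ) :
    klein x y (τ + 1) = cexp (π * Complex.I / 4) * klein x (x + y) τ := by
  rw [klein, klein, ← tsum_mul_left]
  refine tsum_congr fun n => ?_
  obtain ⟨k, hk⟩ := Int.even_mul_succ_self n
  have hk' : (n : ℂ) * (n + 1) = k + k := by exact_mod_cast hk
  rw [← Complex.exp_add, Complex.exp_eq_exp_iff_exists_int]
  exact ⟨k, by linear_combination (π * Complex.I : ℂ) * hk'⟩

lemma exists_klein_neg_one_div {τ : ℂ} (hτ : τ ≠ 0) :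
    ∃ c : ℂ, c ≠ 0 ∧ ∀ x y : ℂ, klein x y (-1 / τ) = c * klein y (-x) τ := by
  have hroot : (-Complex.I * τ) ^ (1 / 2 : ℂ) ≠ 0 := by
    rw [Complex.cpow_ne_zero_iff]
    exact Or.inl (mul_ne_zero (neg_ne_zero.mpr Complex.I_ne_zero) hτ)
  refine ⟨(-Complex.I * τ) ^ (1 / 2 : ℂ) * cexp (-(π * Complex.I / 2)),
    mul_ne_zero hroot (Complex.exp_ne_zero _), fun x y => ?_⟩
  set z := (y + 1 / 2) * τ - (x + 1 / 2) with hz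
  have harg : (y + 1 / 2) * τ + (-x + 1 / 2) = z + 1 := by rw [hz]; ring
  have harg' : (x + 1 / 2) * (-1 / τ) + (y + 1 / 2) = z / τ := by rw [hz]; field_simp; ring
  rw [klein_eq_jacobiTheta₂, klein_eq_jacobiTheta₂, harg, harg', jacobiTheta₂_add_left,
    jacobiTheta₂_functional_equation z τ]
  have hexp : cexp (π * Complex.I * ((x + 1 / 2) ^ 2 * (-1 / τ) + (y + 1 / 2) + x * y)) =
      cexp (-(π * Complex.I / 2)) *
        cexp (π * Complex.I * ((y + 1 / 2) ^ 2 * τ + (-x + 1 / 2) + y * -x)) *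
        cexp (-π * Complex.I * z ^ 2 / τ) := by
    rw [← Complex.exp_add, ← Complex.exp_add, hz]
    congr 1
    field_simp
    ring
  rw [hexp]
  field_simp

lemma exists_klein_smul (γ : SL(2, ℤ)) (τ : ℍ) : ∃ c : ℂ, c ≠ 0 ∧ ∀ x y : ℂ,
    klein x y (γ • τ : ℍ) = c * klein (γ 0 0 * x + γ 1 0 * y) (γ 0 1 * x + γ 1 1 * y) τ := by
  have hγ : γ ∈ Subgroup.closure {ModularGroup.S, ModularGroup.T} := by
    rw [SpecialLinearGroup.SL2Z_generators]; trivial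
  induction hγ using Subgroup.closure_induction generalizing τ with
  | mem g hg =>
    rcases hg with rfl | rfl
    · obtain ⟨c, hc, h⟩ := exists_klein_neg_one_div τ.ne_zero
      refine ⟨c, hc, fun x y => ?_⟩
      rw [UpperHalfPlane.modular_S_smul, UpperHalfPlane.coe_mk, inv_neg, ← one_div, ← neg_div, h,
        ModularGroup.coe_S]
      simp
    · refine ⟨cexp (π * Complex.I / 4), Complex.exp_ne_zero _, fun x y => ?_⟩
      rw [UpperHalfPlane.modular_T_smul, UpperHalfPlane.coe_vadd, Complex.ofReal_one, add_comm,
        klein_add_one, ModularGroup.coe_T]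
      simp
  | one => exact ⟨1, one_ne_zero, fun x y => by simp⟩
  | mul a b _ _ ha hb =>
    obtain ⟨c, hc, hca⟩ := ha (b • τ)
    obtain ⟨d, hd, hdb⟩ := hb τ
    refine ⟨c * d, mul_ne_zero hc hd, fun x y => ?_⟩
    rw [mul_smul, hca, hdb, mul_assoc]
    simp only [Matrix.SpecialLinearGroup.coe_mul, Matrix.mul_apply, Fin.sum_univ_two]
    push_cast
    ring_nf
  | inv a _ ha =>
    obtain ⟨c, hc, hca⟩ := ha (a⁻¹ • τ)
    refine ⟨c⁻¹, inv_ne_zero hc, fun x y => ?_⟩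
    have hdet : (a 0 0 : ℂ) * a 1 1 - a 0 1 * a 1 0 = 1 := by
      exact_mod_cast (Matrix.det_fin_two _).symm.trans a.det_coe
    rw [eq_inv_mul_iff_mul_eq₀ hc, ← smul_inv_smul a τ, hca, inv_smul_smul,
      SpecialLinearGroup.SL2_inv_expl]
    simp only [Matrix.cons_val', Matrix.cons_val_zero, Matrix.cons_val_one,
      Matrix.cons_val_fin_one, Int.cast_neg]
    congr 2
    · linear_combination -x * hdet
    · linear_combination -y * hdet

lemma klein_eq_tsum_zpow_triangular (x y τ : ℂ) :
    klein x y τ = cexp (π * Complex.I * ((x ^ 2 - x + 1 / 4) * τ - (y + 1 / 2) + x * y)) *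
      ∑' n : ℤ, cexp (2 * π * Complex.I * τ) ^ (n * (n - 1) / 2) *
        (-cexp (2 * π * Complex.I * (x * τ + y))) ^ n := by
  rw [klein, ← (Equiv.subRight (1 : ℤ)).tsum_eq, ← tsum_mul_left]
  refine tsum_congr fun n => ?_
  have htri : ((n * (n - 1) / 2 : ℤ) : ℂ) * 2 = n * (n - 1) := by
    exact_mod_cast Int.ediv_mul_cancel (Int.even_mul_pred_self n).two_dvd
  rw [neg_eq_neg_one_mul (cexp _), ← Complex.exp_pi_mul_I, ← Complex.exp_add,
    ← Complex.exp_int_mul, ← Complex.exp_int_mul, ← Complex.exp_add, ← Complex.exp_add]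
  congr 1
  simp only [Equiv.subRight_apply]
  push_cast
  linear_combination -(π * Complex.I * τ) * htri

lemma exists_siegel_eq_mul_klein (τ : ℍ) :
    ∃ c : ℂ, c ≠ 0 ∧ ∀ r : ℚ × ℚ, siegel r τ = c * klein r.1 r.2 τ := by
  set q := cexp (2 * π * Complex.I * τ) with hq
  have hq1 : ‖q‖ < 1 := UpperHalfPlane.norm_exp_two_pi_I_lt_one τ
  have hq0 : q ≠ 0 := Complex.exp_ne_zero _
  refine ⟨-(∏' n : ℕ, (1 - q ^ (n + 1)))⁻¹ * cexp (π * Complex.I * (1 / 2 - τ / 12)),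
    mul_ne_zero (neg_ne_zero.mpr (inv_ne_zero (tprod_one_sub_pow_succ_ne_zero hq1)))
      (Complex.exp_ne_zero _), fun r => ?_⟩
  set w := cexp (2 * π * Complex.I * (r.1 * τ + r.2)) with hw
  have hplus (n : ℕ) :
      cexp (2 * π * Complex.I * (((n : ℂ) + 1 + r.1) * τ + r.2)) = q ^ (n + 1) * w := by
    rw [hq, hw, ← Complex.exp_nat_mul, ← Complex.exp_add]
    push_cast
    ring_nf
  have hminus (n : ℕ) :
      cexp (2 * π * Complex.I * (((n : ℂ) + 1 - r.1) * τ - r.2)) = q ^ (n + 1) * w⁻¹ := by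
    rw [hq, hw, ← Complex.exp_neg, ← Complex.exp_nat_mul, ← Complex.exp_add]
    push_cast
    ring_nf
  have hexp : cexp (π * Complex.I * (((r.1 : ℂ) ^ 2 - r.1 + 1 / 6) * τ)) *
      cexp (π * Complex.I * r.2 * (r.1 - 1)) = cexp (π * Complex.I * (1 / 2 - τ / 12)) *
      cexp (π * Complex.I * (((r.1 : ℂ) ^ 2 - r.1 + 1 / 4) * τ - (r.2 + 1 / 2) + r.1 * r.2)) := by
    rw [← Complex.exp_add, ← Complex.exp_add]
    ring_nf
  have htriple := jacobi_triple_product hq1 hq0 (Complex.exp_ne_zero _ : w ≠ 0)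
  rw [siegel, klein_eq_tsum_zpow_triangular, ← hq, ← hw]
  simp only [hplus, hminus]
  rw [neg_mul, neg_mul, neg_mul, hexp, mul_assoc _ (1 - w), htriple]
  ring

end Klein

/-! ### Modularity of `gOne5` -/

section Modularity

lemma hsmul_coe {N : ℕ} (hN : 0 < N) (τ : ℍ) : (hsmul N τ : ℂ) = N * τ := by
  simp [hsmul, hN]

/-- The point `τ / N`, which enters through `N • (-1 / τ) = -1 / (τ / N)`. -/
def hdiv (N : ℕ) [NeZero N] (τ : ℍ) : ℍ :=
  ⟨τ / N, by rw [Complex.div_natCast_im]; exact div_pos τ.im_pos (by exact_mod_cast NeZero.pos N)⟩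

lemma hdiv_coe (N : ℕ) [NeZero N] (τ : ℍ) : (hdiv N τ : ℂ) = τ / N := rfl

lemma hsmul_S_smul (N : ℕ) [NeZero N] (τ : ℍ) :
    hsmul N (ModularGroup.S • τ) = ModularGroup.S • hdiv N τ := by
  ext1
  rw [hsmul_coe (NeZero.pos N), UpperHalfPlane.modular_S_smul, UpperHalfPlane.modular_S_smul]
  simp only [hdiv_coe]
  rw [inv_neg, inv_neg, inv_div, mul_neg, div_eq_mul_inv]

lemma exists_hsmul_smul {N : ℕ} (hN : 0 < N) (γ : SL(2, ℤ)) (hc : (N : ℤ) ∣ γ 1 0) :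
    ∃ γ' : SL(2, ℤ), γ' 0 0 = γ 0 0 ∧ γ' 0 1 = N * γ 0 1 ∧ N * γ' 1 0 = γ 1 0 ∧
      γ' 1 1 = γ 1 1 ∧ ∀ τ : ℍ, hsmul N (γ • τ) = γ' • hsmul N τ := by
  obtain ⟨c, hc⟩ := hc
  have hdet : γ 0 0 * γ 1 1 - γ 0 1 * γ 1 0 = 1 :=
    (Matrix.det_fin_two _).symm.trans γ.det_coe
  obtain ⟨γ', h00, h01, h10, h11⟩ : ∃ γ' : SL(2, ℤ),
      γ' 0 0 = γ 0 0 ∧ γ' 0 1 = N * γ 0 1 ∧ γ' 1 0 = c ∧ γ' 1 1 = γ 1 1 := by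
    refine ⟨⟨!![γ 0 0, N * γ 0 1; c, γ 1 1], ?_⟩, rfl, rfl, rfl, rfl⟩
    rw [Matrix.det_fin_two_of]
    linear_combination hdet + γ 0 1 * hc
  refine ⟨γ', h00, h01, by rw [h10, hc], h11, fun τ => ?_⟩
  have hdenom := UpperHalfPlane.denom_ne_zero γ τ
  rw [ModularGroup.denom_apply, hc] at hdenom
  push_cast at hdenom
  have hdenom' : (c * (N * τ) + γ 1 1 : ℂ) ≠ 0 := by
    rwa [show (c * (N * τ) + γ 1 1 : ℂ) = N * c * τ + γ 1 1 by ring]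
  ext1
  rw [hsmul_coe hN, UpperHalfPlane.coe_specialLinearGroup_apply,
    UpperHalfPlane.coe_specialLinearGroup_apply, hsmul_coe hN]
  simp only [algebraMap_int_eq, Fin.isValue, eq_intCast, ofReal_intCast, hc,
    Int.cast_mul, Int.cast_natCast, ofReal_mul, ofReal_natCast, h00, h01, h10, h11]
  field_simp

/-- The quotient of Klein forms whose fifth power at `(1/5, 0)` and `5τ` is `gOne5 τ`. -/
def kleinRatio (x y τ : ℂ) : ℂ := klein (2 * x) (2 * y) τ / klein x y τ

lemma kleinRatio_smul (x y : ℂ) (γ : SL(2, ℤ)) (τ : ℍ) :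
    kleinRatio x y (γ • τ : ℍ) =
      kleinRatio (γ 0 0 * x + γ 1 0 * y) (γ 0 1 * x + γ 1 1 * y) τ := by
  obtain ⟨c, hc, h⟩ := exists_klein_smul γ τ
  rw [kleinRatio, kleinRatio, h, h, mul_div_mul_left _ _ hc]
  ring_nf

lemma kleinRatio_add_intCast (x y τ : ℂ) (m n : ℤ) :
    kleinRatio (x + m) (y + n) τ =
      (-1) ^ (m * n + m + n) * cexp (3 * π * Complex.I * (n * x - m * y)) * kleinRatio x y τ := by
  have hnum : klein (2 * (x + m)) (2 * (y + n)) τ =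
      cexp (4 * π * Complex.I * (n * x - m * y)) * klein (2 * x) (2 * y) τ := by
    have h := klein_add_intCast (2 * x) (2 * y) τ (2 * m) (2 * n)
    have heven : Even (2 * m * (2 * n) + 2 * m + 2 * n) := ⟨2 * m * n + m + n, by ring⟩
    rw [heven.neg_one_zpow, one_mul] at h
    push_cast at h
    rw [mul_add, mul_add, h]
    ring_nf
  have hsign : ((-1 : ℂ) ^ (m * n + m + n)) * (-1) ^ (m * n + m + n) = 1 := by
    rw [← mul_zpow]; norm_num
  have hsign0 : ((-1 : ℂ) ^ (m * n + m + n)) ≠ 0 := left_ne_zero_of_mul_eq_one hsign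
  rw [kleinRatio, kleinRatio, hnum, klein_add_intCast, mul_div_mul_comm]
  congr 1
  rw [div_eq_iff (mul_ne_zero hsign0 (Complex.exp_ne_zero _)), mul_mul_mul_comm, hsign, one_mul,
    ← Complex.exp_add]
  ring_nf

lemma gOne5_eq_kleinRatio (τ : ℍ) : gOne5 τ = kleinRatio (1 / 5) 0 (hsmul 5 τ) ^ 5 := by
  obtain ⟨c, hc, h⟩ := exists_siegel_eq_mul_klein (hsmul 5 τ)
  rw [gOne5, h, h, ← div_eq_mul_inv, ← div_pow, mul_div_mul_left _ _ hc, kleinRatio]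
  norm_num

lemma gOne5_smul_of_dvd (γ : SL(2, ℤ)) (hc : 5 ∣ γ 1 0) (τ : ℍ) :
    gOne5 (γ • τ) = kleinRatio (γ 0 0 / 5) (γ 0 1) (hsmul 5 τ) ^ 5 := by
  obtain ⟨γ', h00, h01, -, -, h⟩ := exists_hsmul_smul (N := 5) (by norm_num) γ hc
  rw [gOne5_eq_kleinRatio, h, kleinRatio_smul, h00, h01]
  push_cast
  ring_nf

lemma gOne5_smul_of_mem_Gamma1 {γ : SL(2, ℤ)} (hγ : γ ∈ Gamma1 5) (τ : ℍ) :
    gOne5 (γ • τ) = gOne5 τ := by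
  obtain ⟨ha, -, hc⟩ := (Gamma1_mem 5 γ).mp hγ
  rw [ZMod.intCast_zmod_eq_zero_iff_dvd] at hc
  obtain ⟨k, hk⟩ : (5 : ℤ) ∣ γ 0 0 - 1 := by
    rw [← Nat.cast_ofNat, ← ZMod.intCast_zmod_eq_zero_iff_dvd]
    push_cast
    rw [ha, sub_self]
  replace hk : γ 0 0 = 1 + 5 * k := by linarith
  obtain ⟨c, hc'⟩ := hc
  have hdet : γ 0 0 * γ 1 1 - γ 0 1 * γ 1 0 = 1 :=
    (Matrix.det_fin_two _).symm.trans γ.det_coe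
  have heven : Even ((k * γ 0 1 + k + γ 0 1) * 5 + 3 * γ 0 1) := by
    have hodd : ¬ Even ((1 + 5 * k) * γ 1 1 - γ 0 1 * (5 * c)) := by
      rw [← hk, show 5 * c = γ 1 0 from hc'.symm, hdet]; decide
    simp only [Int.even_add, Int.even_sub, Int.even_mul, show ¬ Even (1 : ℤ) by decide,
      show ¬ Even (5 : ℤ) by decide, show ¬ Even (3 : ℤ) by decide] at hodd ⊢
    tauto
  have hshift := kleinRatio_add_intCast (1 / 5) 0 (hsmul 5 τ) k (γ 0 1)
  rw [zero_add, mul_zero, sub_zero] at hshift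
  have hexp : cexp (3 * π * Complex.I * (γ 0 1 * (1 / 5))) ^ 5 = (-1) ^ (3 * γ 0 1) := by
    rw [← exp_pi_I_mul_intCast, ← Complex.exp_nat_mul]
    push_cast
    ring_nf
  rw [gOne5_smul_of_dvd γ ⟨c, hc'⟩, gOne5_eq_kleinRatio,
    show (γ 0 0 : ℂ) / 5 = 1 / 5 + k by rw [hk]; push_cast; ring, hshift, mul_pow, mul_pow, hexp,
    ← zpow_natCast, ← _root_.zpow_mul, ← zpow_add₀ (by norm_num)]
  exact (congrArg (· * _) heven.neg_one_zpow).trans (one_mul _)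

/-- An element of `SL(2, ℤ)` carrying `∞` to the cusp `2/5`. -/
def twoFifths : SL(2, ℤ) := ⟨!![2, 1; 5, 3], by simp [Matrix.det_fin_two_of]⟩

lemma gOne5_twoFifths_smul (τ : ℍ) : gOne5 (twoFifths • τ) = -(gOne5 τ)⁻¹ := by
  have hklein (t : ℂ) : klein (2 * (2 / 5)) 0 t = klein (1 / 5) 0 t := by
    have h := klein_add_intCast_left (-(1 / 5)) (-0) t 1
    rw [klein_neg, neg_zero, mul_zero, mul_zero, neg_zero, Complex.exp_zero, zpow_one] at h
    rw [show (2 * (2 / 5) : ℂ) = -(1 / 5) + (1 : ℤ) by norm_num, h]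
    ring
  have hinv (t : ℂ) : kleinRatio (2 / 5) 0 t = (kleinRatio (1 / 5) 0 t)⁻¹ := by
    rw [kleinRatio, kleinRatio, mul_zero, hklein, inv_div, show (2 * (1 / 5) : ℂ) = 2 / 5 by ring]
  have hshift := kleinRatio_add_intCast (2 / 5) 0 (hsmul 5 τ) 0 1
  have hexp : cexp (3 * π * Complex.I * (2 / 5)) ^ 5 = 1 := by
    rw [← Complex.exp_nat_mul, Complex.exp_eq_one_iff]
    exact ⟨3, by push_cast; ring⟩
  simp only [Int.cast_zero, Int.cast_one, add_zero, zero_add, one_mul, zero_mul, sub_zero,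
    zpow_one] at hshift
  have h00 : twoFifths 0 0 = 2 := rfl
  have h01 : twoFifths 0 1 = 1 := rfl
  rw [gOne5_smul_of_dvd twoFifths ⟨1, rfl⟩, gOne5_eq_kleinRatio, ← inv_pow, ← hinv, h00, h01,
    Int.cast_ofNat, Int.cast_one, hshift, mul_pow, mul_pow, hexp]
  norm_num

lemma gOne5_S_smul (τ : ℍ) :
    gOne5 (ModularGroup.S • τ) = (klein 0 (2 / 5) (τ / 5) / klein 0 (1 / 5) (τ / 5)) ^ 5 := by
  have hneg (y t : ℂ) : klein 0 (-y) t = -klein 0 y t := by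
    simpa only [neg_zero] using klein_neg 0 y t
  rw [gOne5_eq_kleinRatio, hsmul_S_smul, kleinRatio_smul, kleinRatio, ModularGroup.coe_S, hdiv_coe]
  simp [hneg, div_eq_mul_inv]

end Modularity

/-! ### Power series with rational coefficients -/

section PowerSeriesOnDisc

/-- `F` agrees on the open unit disc with the sum of the convergent power series `p`; nothing is
required of `F` elsewhere. -/
def HasPowerSeriesOnDisc (p : PowerSeries ℂ) (F : ℂ → ℂ) : Prop :=
  ∀ q : ℂ, ‖q‖ < 1 → HasSum (fun n : ℕ => PowerSeries.coeff n p * q ^ n) (F q)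

namespace HasPowerSeriesOnDisc

variable {p p' : PowerSeries ℂ} {F G : ℂ → ℂ}

lemma C (c : ℂ) : HasPowerSeriesOnDisc (PowerSeries.C c) fun _ => c := fun q _ => by
  simpa [PowerSeries.coeff_C] using
    hasSum_single (f := fun n : ℕ => PowerSeries.coeff n (PowerSeries.C c) * q ^ n) 0
      fun n hn => by simp [PowerSeries.coeff_C, hn]

lemma X : HasPowerSeriesOnDisc PowerSeries.X fun q => q := fun q _ => by
  simpa [PowerSeries.coeff_X] using
    hasSum_single (f := fun n : ℕ => PowerSeries.coeff n (PowerSeries.X : PowerSeries ℂ) * q ^ n) 1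
      fun n hn => by simp [PowerSeries.coeff_X, hn]

lemma add (h : HasPowerSeriesOnDisc p F) (h' : HasPowerSeriesOnDisc p' G) :
    HasPowerSeriesOnDisc (p + p') (F + G) := fun q hq =>
  ((h q hq).add (h' q hq)).congr_fun fun n => by rw [map_add, add_mul]

lemma mul (h : HasPowerSeriesOnDisc p F) (h' : HasPowerSeriesOnDisc p' G) :
    HasPowerSeriesOnDisc (p * p') (F * G) := by
  intro q hq
  have hp := (h q hq).summable.norm
  have hp' := (h' q hq).summable.norm
  have hprod := (summable_norm_sum_mul_antidiagonal_of_summable_norm hp hp').of_norm.hasSum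
  rw [← tsum_mul_tsum_eq_tsum_sum_antidiagonal_of_summable_norm hp hp', (h q hq).tsum_eq,
    (h' q hq).tsum_eq] at hprod
  refine hprod.congr_fun fun n => ?_
  rw [PowerSeries.coeff_mul, Finset.sum_mul]
  refine Finset.sum_congr rfl fun x hx => ?_
  rw [← Finset.HasAntidiagonal.mem_antidiagonal.mp hx, pow_add]
  ring

lemma hasFPowerSeriesOnBall (h : HasPowerSeriesOnDisc p F) : HasFPowerSeriesOnBall F
    (FormalMultilinearSeries.ofScalars ℂ fun n => PowerSeries.coeff n p) 0 1 where
  r_le := by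
    refine ENNReal.le_of_forall_nnreal_lt fun r hr =>
      FormalMultilinearSeries.le_radius_of_summable _ ?_
    have hr : ‖((r : ℝ) : ℂ)‖ < 1 := by simpa using hr
    refine (h _ hr).summable.norm.congr fun n => ?_
    simp
  r_pos := one_pos
  hasSum {q} hq := by
    have hq : ‖q‖ < 1 := by
      rwa [Metric.mem_eball, edist_zero_right, ← ofReal_norm, ENNReal.ofReal_lt_one] at hq
    rw [zero_add]
    exact (h q hq).congr_fun fun n => by
      rw [FormalMultilinearSeries.ofScalars_apply_eq, smul_eq_mul]

lemma unique (h : HasPowerSeriesOnDisc p F) (h' : HasPowerSeriesOnDisc p' F) : p = p' := by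
  ext n
  exact congrFun (FormalMultilinearSeries.ofScalars_series_injective ℂ ℂ
    (h.hasFPowerSeriesOnBall.hasFPowerSeriesAt.eq_formalMultilinearSeries
      h'.hasFPowerSeriesOnBall.hasFPowerSeriesAt)) n

lemma differentiableOn (h : HasPowerSeriesOnDisc p F) :
    DifferentiableOn ℂ F (Metric.ball 0 1) := by
  rw [← Metric.eball_ofReal, ENNReal.ofReal_one]
  exact h.hasFPowerSeriesOnBall.differentiableOn

lemma congr (h : HasPowerSeriesOnDisc p F) (hFG : ∀ q, ‖q‖ < 1 → G q = F q) :
    HasPowerSeriesOnDisc p G := fun q hq => hFG q hq ▸ h q hq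

lemma apply_zero (h : HasPowerSeriesOnDisc p F) : F 0 = PowerSeries.coeff 0 p := by
  rw [(h 0 (by simp)).unique (hasSum_single 0 fun n hn => by simp [hn])]
  simp

lemma exists_eq_mul (h : HasPowerSeriesOnDisc (PowerSeries.X * p) F) :
    ∃ G, HasPowerSeriesOnDisc p G ∧ ∀ q, ‖q‖ < 1 → F q = q * G q := by
  have hshift : ∀ q : ℂ, ‖q‖ < 1 →
      HasSum (fun n : ℕ => q * (PowerSeries.coeff n p * q ^ n)) (F q) := by
    intro q hq
    have := (hasSum_nat_add_iff' 1).mpr (h q hq)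
    simp only [Finset.range_one, Finset.sum_singleton, PowerSeries.coeff_zero_X_mul, zero_mul,
      sub_zero, PowerSeries.coeff_succ_X_mul] at this
    exact this.congr_fun fun n => by ring
  have hG : HasPowerSeriesOnDisc p fun q => ∑' n : ℕ, PowerSeries.coeff n p * q ^ n := by
    intro q hq
    refine Summable.hasSum ?_
    by_cases hq0 : q = 0
    · exact summable_of_ne_finset_zero (s := {0}) fun n hn => by
        simp [hq0, Finset.notMem_singleton.mp hn]
    · exact (summable_mul_left_iff hq0).mp (hshift q hq).summable
  exact ⟨_, hG, fun q hq => (hshift q hq).unique ((hG q hq).mul_left q)⟩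

end HasPowerSeriesOnDisc

lemma exists_hasPowerSeriesOnDisc {F : ℂ → ℂ} (hF : DifferentiableOn ℂ F (Metric.ball 0 1)) :
    ∃ p, HasPowerSeriesOnDisc p F := by
  refine ⟨PowerSeries.mk fun n => (n.factorial : ℂ)⁻¹ * iteratedDeriv n F 0, fun q hq => ?_⟩
  refine (Complex.hasSum_taylorSeries_on_ball (r := 1) hF (by simpa using hq)).congr_fun fun n => ?_
  rw [PowerSeries.coeff_mk, sub_zero, smul_eq_mul, smul_eq_mul]
  ring

/-- The `ℚ`-algebra of functions which on the open unit disc are the sum of a convergent power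
series with rational coefficients. -/
def ratPowerSeries : Subalgebra ℚ (ℂ → ℂ) where
  carrier := {F | ∃ p : PowerSeries ℚ, HasPowerSeriesOnDisc (p.map (algebraMap ℚ ℂ)) F}
  mul_mem' := by
    rintro F G ⟨p, hp⟩ ⟨p', hp'⟩
    exact ⟨p * p', by simpa only [map_mul] using hp.mul hp'⟩
  add_mem' := by
    rintro F G ⟨p, hp⟩ ⟨p', hp'⟩
    exact ⟨p + p', by simpa only [map_add] using hp.add hp'⟩
  algebraMap_mem' c :=
    ⟨PowerSeries.C c, by rw [PowerSeries.map_C]; exact HasPowerSeriesOnDisc.C (c : ℂ)⟩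

namespace ratPowerSeries

variable {F : ℂ → ℂ}

lemma id_mem : id ∈ ratPowerSeries :=
  ⟨PowerSeries.X, by rw [PowerSeries.map_X]; exact HasPowerSeriesOnDisc.X⟩

lemma differentiableOn (h : F ∈ ratPowerSeries) : DifferentiableOn ℂ F (Metric.ball 0 1) :=
  h.choose_spec.differentiableOn

lemma exists_apply_zero (h : F ∈ ratPowerSeries) : ∃ c : ℚ, F 0 = c := by
  obtain ⟨p, hp⟩ := h
  exact ⟨_, by rw [hp.apply_zero, PowerSeries.coeff_map]; rfl⟩

lemma inv_mem (h : F ∈ ratPowerSeries) (h0 : ∀ q, ‖q‖ < 1 → F q ≠ 0) :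
    F⁻¹ ∈ ratPowerSeries := by
  obtain ⟨d, hd⟩ := exists_hasPowerSeriesOnDisc
    ((differentiableOn h).inv fun q hq => h0 q (by simpa using hq))
  obtain ⟨p, hp⟩ := h
  have hpd : p.map (algebraMap ℚ ℂ) * d = 1 :=
    ((hp.mul hd).congr fun q hq => (mul_inv_cancel₀ (h0 q hq)).symm).unique
      (HasPowerSeriesOnDisc.C 1)
  have hp0 : PowerSeries.constantCoeff p ≠ 0 := fun hp0 => h0 0 (by simp) <| by
    rw [hp.apply_zero, PowerSeries.coeff_map, PowerSeries.coeff_zero_eq_constantCoeff_apply, hp0,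
      map_zero]
  have hpinv : (p⁻¹).map (algebraMap ℚ ℂ) * p.map (algebraMap ℚ ℂ) = 1 := by
    rw [← map_mul, PowerSeries.inv_mul_cancel _ hp0, map_one]
  exact ⟨p⁻¹, left_inv_eq_right_inv hpinv hpd ▸ hd⟩

lemma exists_eq_mul (h : F ∈ ratPowerSeries) (h0 : F 0 = 0) :
    ∃ G ∈ ratPowerSeries, ∀ q, ‖q‖ < 1 → F q = q * G q := by
  obtain ⟨p, hp⟩ := h
  have hp0 : PowerSeries.constantCoeff p = 0 := by
    have := hp.apply_zero
    rw [h0, PowerSeries.coeff_map, PowerSeries.coeff_zero_eq_constantCoeff_apply] at this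
    simpa using this.symm
  obtain ⟨p, rfl⟩ := PowerSeries.X_dvd_iff.mpr hp0
  rw [map_mul, PowerSeries.map_X] at hp
  obtain ⟨G, hG, hFG⟩ := hp.exists_eq_mul
  exact ⟨G, ⟨p, hG⟩, hFG⟩

end ratPowerSeries

end PowerSeriesOnDisc

section ThetaSeries

/-- The exponent `N n(n-1)/2 + i n` of the theta series `altTheta N i`; it is non-negative for
`i < N`, so that the truncation is harmless. -/
def altThetaExp (N i : ℕ) (n : ℤ) : ℕ := (N * (n * (n - 1) / 2) + i * n).toNat

/-- The alternating theta series `∑ (-1)ⁿ q^(N n(n-1)/2 + i n)`, which up to a power of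
`q = e^{2πiτ}` and a constant is the Klein form of characteristic `(i/N, 0)` at `Nτ`. -/
def altTheta (N i : ℕ) (q : ℂ) : ℂ := ∑' n : ℤ, (-1) ^ n * q ^ altThetaExp N i n

variable {N i : ℕ} {q : ℂ}

lemma two_mul_triangular (n : ℤ) : 2 * (n * (n - 1) / 2) = n * (n - 1) :=
  Int.mul_ediv_cancel' (Int.even_mul_pred_self n).two_dvd

lemma natCast_altThetaExp (h : i < N) (n : ℤ) :
    (altThetaExp N i n : ℤ) = N * (n * (n - 1) / 2) + i * n := by
  have htri := two_mul_triangular n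
  refine Int.toNat_of_nonneg ?_
  rcases le_or_gt n 0 with hn | hn
  · have hle : -n ≤ n * (n - 1) / 2 := by
      rcases hn.eq_or_lt with rfl | hn
      · rfl
      · nlinarith
    have hN : (i : ℤ) ≤ N := by exact_mod_cast h.le
    nlinarith [hN, mul_le_mul_of_nonneg_left hle (Int.natCast_nonneg N)]
  · have hnonneg : 0 ≤ n * (n - 1) / 2 := by nlinarith
    positivity

lemma altThetaExp_injective (hi : 0 < i) (hiN : 2 * i < N) :
    Function.Injective (altThetaExp N i) := by
  intro m n hmn
  have hexp : (altThetaExp N i m : ℤ) = altThetaExp N i n := by rw [hmn]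
  rw [natCast_altThetaExp (by omega), natCast_altThetaExp (by omega)] at hexp
  have hprod : (m - n) * (N * (m + n - 1) + 2 * i) = 0 := by
    linear_combination 2 * hexp - N * two_mul_triangular m + N * two_mul_triangular n
  refine sub_eq_zero.mp ((mul_eq_zero.mp hprod).resolve_right fun h => ?_)
  have hdvd : (N : ℤ) ∣ (2 * i : ℕ) := ⟨-(m + n - 1), by push_cast; linear_combination h⟩
  exact absurd (Nat.le_of_dvd (by omega) (Int.natCast_dvd_natCast.mp hdvd)) (by omega)

lemma summable_altTheta (hi : 0 < i) (hiN : 2 * i < N) (hq : ‖q‖ < 1) :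
    Summable fun n : ℤ => (-1 : ℂ) ^ n * q ^ altThetaExp N i n := by
  refine Summable.of_norm (((summable_geometric_of_lt_one (norm_nonneg q) hq).comp_injective
    (altThetaExp_injective hi hiN)).congr fun n => ?_)
  simp

lemma altTheta_mem_ratPowerSeries (hi : 0 < i) (hiN : 2 * i < N) :
    altTheta N i ∈ ratPowerSeries := by
  have hinj := altThetaExp_injective hi hiN
  refine ⟨PowerSeries.mk (Function.extend (altThetaExp N i) (fun n => (-1 : ℚ) ^ n) 0),
    fun q hq => ?_⟩
  refine ((hasSum_extend_zero hinj).mpr (summable_altTheta hi hiN hq).hasSum).congr_fun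
    fun k => ?_
  rw [PowerSeries.coeff_map, PowerSeries.coeff_mk]
  by_cases hk : ∃ n, altThetaExp N i n = k
  · obtain ⟨n, rfl⟩ := hk
    rw [hinj.extend_apply, hinj.extend_apply]
    simp
  · rw [Function.extend_apply' _ _ _ hk, Function.extend_apply' _ _ _ hk]
    simp

lemma altThetaExp_zero (N i : ℕ) : altThetaExp N i 0 = 0 := by simp [altThetaExp]

lemma altTheta_zero (hi : 0 < i) (hiN : 2 * i < N) : altTheta N i 0 = 1 := by
  rw [altTheta, tsum_eq_single 0]
  · rw [altThetaExp_zero, zpow_zero, pow_zero, mul_one]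
  · intro n hn
    have hne : altThetaExp N i n ≠ 0 := fun h =>
      hn (altThetaExp_injective hi hiN (h.trans (altThetaExp_zero N i).symm))
    rw [zero_pow hne, mul_zero]

lemma altTheta_eq_tsum_zpow_triangular (hiN : i < N) (hq0 : q ≠ 0) :
    altTheta N i q = ∑' n : ℤ, (q ^ N) ^ (n * (n - 1) / 2) * (-q ^ i) ^ n := by
  refine tsum_congr fun n => ?_
  rw [← zpow_natCast q (altThetaExp N i n), natCast_altThetaExp hiN, neg_eq_neg_one_mul (q ^ i),
    mul_zpow, zpow_add₀ hq0, _root_.zpow_mul, _root_.zpow_mul, zpow_natCast, zpow_natCast]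
  ring

lemma altTheta_ne_zero (hi : 0 < i) (hiN : 2 * i < N) (hq : ‖q‖ < 1) : altTheta N i q ≠ 0 := by
  by_cases hq0 : q = 0
  · rw [hq0, altTheta_zero hi hiN]
    exact one_ne_zero
  have hsub {k : ℕ} (hk : 0 < k) : 1 - q ^ k ≠ 0 :=
    Nat.sub_add_cancel hk ▸ one_sub_pow_succ_ne_zero hq (k - 1)
  have hqN : ‖q ^ N‖ < 1 := norm_pow q N ▸ pow_lt_one₀ (norm_nonneg q) hq (by omega)
  have hplus (n : ℕ) : 1 - (q ^ N) ^ (n + 1) * q ^ i ≠ 0 := by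
    rw [← pow_mul, ← pow_add]
    exact hsub (by omega)
  have hminus (n : ℕ) : 1 - (q ^ N) ^ (n + 1) * (q ^ i)⁻¹ ≠ 0 := by
    have hle : i < N * (n + 1) := by nlinarith
    rw [← pow_mul, ← pow_sub₀ q hq0 hle.le]
    exact hsub (by omega)
  have htriple := jacobi_triple_product hqN (pow_ne_zero N hq0) (pow_ne_zero i hq0)
  rw [← altTheta_eq_tsum_zpow_triangular (by omega) hq0,
    (multipliable_one_sub_pow_succ_mul hqN _).tprod_mul
      (multipliable_one_sub_pow_succ_mul hqN _)] at htriple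
  refine right_ne_zero_of_mul (htriple ▸ mul_ne_zero (hsub hi) (mul_ne_zero ?_ ?_))
  · exact tprod_one_sub_pow_succ_mul_ne_zero hqN hplus
  · exact tprod_one_sub_pow_succ_mul_ne_zero hqN hminus

lemma klein_div_natCast (hiN : i < N) (τ : ℂ) :
    klein (i / N) 0 (N * τ) = cexp (π * Complex.I *
      (((i / N) ^ 2 - i / N + 1 / 4) * (N * τ) - 1 / 2)) * altTheta N i (𝕢 1 τ) := by
  have hN : (N : ℂ) ≠ 0 := Nat.cast_ne_zero.mpr (by omega)
  have hpow (k : ℕ) : 𝕢 1 τ ^ k = cexp (2 * π * Complex.I * (k * τ)) := by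
    rw [Function.Periodic.qParam, ← Complex.exp_nat_mul]
    push_cast
    ring_nf
  rw [klein_eq_tsum_zpow_triangular,
    altTheta_eq_tsum_zpow_triangular hiN (Function.Periodic.qParam_ne_zero τ), hpow, hpow,
    add_zero, zero_add, mul_zero, add_zero, show (i / N : ℂ) * (N * τ) = i * τ by field_simp]

/-- The power series `A` with `g_{1,5} = q⁻¹ A(q)`. -/
def gSeries : ℂ → ℂ := (altTheta 5 2 * (altTheta 5 1)⁻¹) ^ 5

lemma gSeries_mem_ratPowerSeries : gSeries ∈ ratPowerSeries :=
  pow_mem (mul_mem (altTheta_mem_ratPowerSeries two_pos (by norm_num))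
    (ratPowerSeries.inv_mem (altTheta_mem_ratPowerSeries one_pos (by norm_num))
      fun _ hq => altTheta_ne_zero one_pos (by norm_num) hq)) 5

lemma gSeries_ne_zero (hq : ‖q‖ < 1) : gSeries q ≠ 0 :=
  pow_ne_zero 5 (mul_ne_zero (altTheta_ne_zero two_pos (by norm_num) hq)
    (inv_ne_zero (altTheta_ne_zero one_pos (by norm_num) hq)))

lemma gSeries_zero : gSeries 0 = 1 := by
  simp [gSeries, altTheta_zero (N := 5) two_pos, altTheta_zero (N := 5) one_pos]

lemma gOne5_eq_gSeries (τ : ℍ) : gOne5 τ = 𝕢 1 τ ^ (-1 : ℤ) * gSeries (𝕢 1 τ) := by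
  have h1 := klein_div_natCast (N := 5) (i := 1) (by norm_num) τ
  have h2 := klein_div_natCast (N := 5) (i := 2) (by norm_num) τ
  push_cast at h1 h2
  rw [gOne5_eq_kleinRatio, kleinRatio, hsmul_coe (by norm_num), mul_zero, mul_one_div,
    Nat.cast_ofNat, h1, h2, mul_div_mul_comm, ← Complex.exp_sub, mul_pow, ← Complex.exp_nat_mul,
    _root_.zpow_neg_one, Function.Periodic.qParam, ← Complex.exp_neg, gSeries,
    Pi.pow_apply, Pi.mul_apply, Pi.inv_apply, div_eq_mul_inv (altTheta 5 2 _)]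
  congr 2
  push_cast
  ring

end ThetaSeries

/-! ### Invariant functions on the upper half-plane -/

section Invariant

/-- The algebra of the `Γ`-invariant holomorphic functions on `ℍ`, with no condition at the
cusps. -/
def holInvariant (Γ : Subgroup SL(2, ℤ)) : Subalgebra ℂ (ℍ → ℂ) where
  carrier := {f | MDifferentiable 𝓘(ℂ) 𝓘(ℂ) f ∧ ∀ γ ∈ Γ, ∀ τ, f (γ • τ) = f τ}
  add_mem' hf hg := ⟨hf.1.add hg.1, fun γ hγ τ => by
    rw [Pi.add_apply, Pi.add_apply, hf.2 γ hγ, hg.2 γ hγ]⟩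
  mul_mem' hf hg := ⟨hf.1.mul hg.1, fun γ hγ τ => by
    rw [Pi.mul_apply, Pi.mul_apply, hf.2 γ hγ, hg.2 γ hγ]⟩
  algebraMap_mem' _ := ⟨mdifferentiable_const, fun _ _ _ => rfl⟩

lemma mdifferentiable_comp_coe {F : ℂ → ℂ} (hF : DifferentiableOn ℂ F {z | 0 < z.im}) :
    MDifferentiable 𝓘(ℂ) 𝓘(ℂ) fun τ : ℍ => F τ :=
  UpperHalfPlane.mdifferentiable_iff.mpr (hF.congr fun z hz => by
    rw [Function.comp_apply, ofComplex_apply_of_im_pos hz])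

lemma mdifferentiable_comp_qParam {F : ℂ → ℂ} (hF : DifferentiableOn ℂ F (Metric.ball 0 1)) :
    MDifferentiable 𝓘(ℂ) 𝓘(ℂ) fun τ : ℍ => F (𝕢 1 τ) :=
  mdifferentiable_comp_coe (F := fun z => F (𝕢 1 z)) (hF.comp
    Function.Periodic.differentiable_qParam.differentiableOn fun _ hz =>
      mem_ball_zero_iff.mpr (Function.Periodic.norm_qParam_lt_one one_pos hz))

lemma mdifferentiable_qParam_zpow (h : ℝ) (n : ℤ) :
    MDifferentiable 𝓘(ℂ) 𝓘(ℂ) fun τ : ℍ => 𝕢 h τ ^ n :=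
  mdifferentiable_comp_coe (F := fun z => 𝕢 h z ^ n) fun _ _ =>
    (Function.Periodic.differentiable_qParam.differentiableAt.zpow
      (Or.inl (Function.Periodic.qParam_ne_zero _))).differentiableWithinAt

lemma mdifferentiable_inv {f : ℍ → ℂ} (hf : MDifferentiable 𝓘(ℂ) 𝓘(ℂ) f) (h0 : ∀ τ, f τ ≠ 0) :
    MDifferentiable 𝓘(ℂ) 𝓘(ℂ) f⁻¹ := by
  rw [UpperHalfPlane.mdifferentiable_iff] at hf ⊢
  exact hf.inv fun _ _ => h0 _

namespace holInvariant

variable {Γ : Subgroup SL(2, ℤ)} {f : ℍ → ℂ}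

lemma inv_mem (hf : f ∈ holInvariant Γ) (h0 : ∀ τ, f τ ≠ 0) : f⁻¹ ∈ holInvariant Γ :=
  ⟨mdifferentiable_inv hf.1 h0, fun γ hγ τ => by rw [Pi.inv_apply, Pi.inv_apply, hf.2 γ hγ]⟩

lemma mdifferentiable_comp_smul (hf : f ∈ holInvariant Γ) (γ : SL(2, ℤ)) :
    MDifferentiable 𝓘(ℂ) 𝓘(ℂ) fun τ => f (γ • τ) :=
  hf.1.comp (UpperHalfPlane.mdifferentiable_smul (g := (γ : GL (Fin 2) ℝ)) (by simp))

lemma exists_eq_const [Γ.FiniteIndex] (hf : f ∈ holInvariant Γ)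
    (hbdd : ∀ γ : SL(2, ℤ), IsBoundedAtImInfty fun τ => f (γ • τ)) : ∃ c, ∀ τ, f τ = c := by
  have hslash (γ : SL(2, ℤ)) : SlashAction.map (0 : ℤ) γ f = fun τ => f (γ • τ) := by
    rw [ModularForm.SL_slash_def]; simp
  let F : ModularForm (Γ : Subgroup (GL (Fin 2) ℝ)) 0 :=
    { toFun := f
      slash_action_eq' := by
        rintro _ ⟨γ, hγ, rfl⟩
        have hγf := hslash γ
        rw [ModularForm.SL_slash] at hγf
        exact hγf.trans (funext (hf.2 γ hγ))
      holo' := hf.1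
      bdd_at_cusps' := fun {c} hc => by
        rw [Subgroup.IsArithmetic.isCusp_iff_isCusp_SL2Z] at hc
        rw [OnePoint.isBoundedAt_iff_forall_SL2Z hc]
        intro γ _
        rw [hslash]
        exact hbdd γ }
  obtain ⟨c, hc⟩ := ModularForm.eq_const_of_weight_zero F
  exact ⟨c, congrFun hc⟩

end holInvariant

end Invariant

/-! ### Rational `q`-expansions -/

section RationalQExpansion

open Filter Topology Asymptotics

lemma qParam_five_pow_five (τ : ℂ) : 𝕢 5 τ ^ 5 = 𝕢 1 τ := by
  rw [Function.Periodic.qParam, Function.Periodic.qParam, ← Complex.exp_nat_mul]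
  push_cast
  ring_nf

lemma tendsto_comp_qParam {F : ℂ → ℂ} (hF : F ∈ ratPowerSeries) :
    Tendsto (fun τ : ℍ => F (𝕢 1 τ)) atImInfty (𝓝 (F 0)) :=
  ((ratPowerSeries.differentiableOn hF).continuousOn.continuousAt
    (Metric.ball_mem_nhds 0 one_pos)).tendsto.comp
    (UpperHalfPlane.qParam_tendsto_atImInfty one_pos)

/-- `f` has an expansion `qⁿ (c₀ + c₁ q + c₂ q² + ⋯)` at `∞` with rational coefficients. The
leading coefficient `c₀` may vanish, so `n` is only a lower bound for the order of `f`. -/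
def HasRatQExpansion (f : ℍ → ℂ) (n : ℤ) : Prop :=
  ∃ F ∈ ratPowerSeries, ∀ τ : ℍ, f τ = 𝕢 1 τ ^ n * F (𝕢 1 τ)

namespace HasRatQExpansion

variable {f g : ℍ → ℂ} {m n : ℤ}

lemma mul (hf : HasRatQExpansion f m) (hg : HasRatQExpansion g n) :
    HasRatQExpansion (f * g) (m + n) := by
  obtain ⟨F, hF, hfF⟩ := hf
  obtain ⟨G, hG, hgG⟩ := hg
  refine ⟨F * G, mul_mem hF hG, fun τ => ?_⟩
  rw [Pi.mul_apply, hfF, hgG, zpow_add₀ (Function.Periodic.qParam_ne_zero _), Pi.mul_apply]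
  ring

lemma pow (hf : HasRatQExpansion f n) (k : ℕ) : HasRatQExpansion (f ^ k) (k * n) := by
  obtain ⟨F, hF, hfF⟩ := hf
  refine ⟨F ^ k, pow_mem hF k, fun τ => ?_⟩
  rw [Pi.pow_apply, hfF, mul_pow, ← zpow_natCast, ← _root_.zpow_mul, mul_comm n, Pi.pow_apply]

lemma mono (hf : HasRatQExpansion f n) (hmn : m ≤ n) : HasRatQExpansion f m := by
  obtain ⟨F, hF, hfF⟩ := hf
  obtain ⟨k, rfl⟩ := Int.le.dest hmn
  refine ⟨id ^ k * F, mul_mem (pow_mem ratPowerSeries.id_mem k) hF, fun τ => ?_⟩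
  rw [hfF, zpow_add₀ (Function.Periodic.qParam_ne_zero _), zpow_natCast, mul_assoc]
  rfl

lemma inv {F : ℂ → ℂ} (hF : F ∈ ratPowerSeries) (h0 : ∀ q, ‖q‖ < 1 → F q ≠ 0)
    (hf : ∀ τ : ℍ, f τ = 𝕢 1 τ ^ n * F (𝕢 1 τ)) : HasRatQExpansion f⁻¹ (-n) :=
  ⟨F⁻¹, ratPowerSeries.inv_mem hF h0, fun τ => by
    rw [Pi.inv_apply, hf, mul_inv, ← _root_.zpow_neg, Pi.inv_apply]⟩

lemma isBigO (hf : HasRatQExpansion f n) : f =O[atImInfty] fun τ => 𝕢 5 τ ^ (5 * n) := by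
  obtain ⟨F, hF, hfF⟩ := hf
  refine ((isBigO_refl (fun τ : ℍ => 𝕢 1 τ ^ n) atImInfty).mul
    ((tendsto_comp_qParam hF).isBigO_one ℂ)).congr (fun τ => (hfF τ).symm) fun τ => ?_
  rw [mul_one, _root_.zpow_mul, ← qParam_five_pow_five]
  rfl

end HasRatQExpansion

lemma gOne5_ne_zero (τ : ℍ) : gOne5 τ ≠ 0 := by
  rw [gOne5_eq_gSeries]
  exact mul_ne_zero (zpow_ne_zero _ (Function.Periodic.qParam_ne_zero _))
    (gSeries_ne_zero (Function.Periodic.norm_qParam_lt_one one_pos τ.im_pos))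

lemma hasRatQExpansion_gOne5 : HasRatQExpansion gOne5 (-1) :=
  ⟨gSeries, gSeries_mem_ratPowerSeries, gOne5_eq_gSeries⟩

lemma hasRatQExpansion_gOne5_inv : HasRatQExpansion gOne5⁻¹ 1 :=
  HasRatQExpansion.inv gSeries_mem_ratPowerSeries (fun _ => gSeries_ne_zero) gOne5_eq_gSeries

lemma gOne5_mem_holInvariant : gOne5 ∈ holInvariant (Gamma1 5) := by
  refine ⟨?_, fun γ => gOne5_smul_of_mem_Gamma1⟩
  rw [show gOne5 = fun τ : ℍ => 𝕢 1 τ ^ (-1 : ℤ) * gSeries (𝕢 1 τ) from funext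
    gOne5_eq_gSeries]
  exact (mdifferentiable_qParam_zpow 1 (-1)).mul
    (mdifferentiable_comp_qParam (ratPowerSeries.differentiableOn gSeries_mem_ratPowerSeries))

/-- The function `g_{1,5}² - 11 g_{1,5} - 1`; its only zeros are the cusps `0` and `1/2`. -/
def gQuad (τ : ℍ) : ℂ := gOne5 τ ^ 2 - 11 * gOne5 τ - 1

lemma gQuad_mem_holInvariant : gQuad ∈ holInvariant (Gamma1 5) :=
  sub_mem (sub_mem (pow_mem gOne5_mem_holInvariant 2)
    (mul_mem (algebraMap_mem _ (11 : ℂ)) gOne5_mem_holInvariant)) (one_mem _)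

lemma gQuad_twoFifths_smul (τ : ℍ) :
    gQuad (twoFifths • τ) = -(gQuad τ * (gOne5 τ)⁻¹ ^ 2) := by
  have hg := gOne5_ne_zero τ
  rw [gQuad, gQuad, gOne5_twoFifths_smul]
  field_simp
  ring

/-- The power series `U` with `g_{1,5}² - 11 g_{1,5} - 1 = q⁻² U(q)`. -/
def gQuadSeries : ℂ → ℂ := gSeries ^ 2 - algebraMap ℚ (ℂ → ℂ) 11 * id * gSeries - id ^ 2

lemma gQuadSeries_mem_ratPowerSeries : gQuadSeries ∈ ratPowerSeries :=
  sub_mem (sub_mem (pow_mem gSeries_mem_ratPowerSeries 2)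
    (mul_mem (mul_mem (algebraMap_mem _ 11) ratPowerSeries.id_mem) gSeries_mem_ratPowerSeries))
    (pow_mem ratPowerSeries.id_mem 2)

lemma gQuadSeries_zero : gQuadSeries 0 = 1 := by simp [gQuadSeries, gSeries_zero]

lemma gQuad_eq_gQuadSeries (τ : ℍ) : gQuad τ = 𝕢 1 τ ^ (-2 : ℤ) * gQuadSeries (𝕢 1 τ) := by
  have hq : 𝕢 1 τ ≠ 0 := Function.Periodic.qParam_ne_zero _
  have h11 : algebraMap ℚ (ℂ → ℂ) 11 (𝕢 1 τ) = 11 := by simp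
  rw [gQuad, gOne5_eq_gSeries, gQuadSeries]
  simp only [Pi.sub_apply, Pi.mul_apply, Pi.pow_apply, id_eq, h11]
  field_simp

lemma hasRatQExpansion_gQuad : HasRatQExpansion gQuad (-2) :=
  ⟨gQuadSeries, gQuadSeries_mem_ratPowerSeries, gQuad_eq_gQuadSeries⟩

end RationalQExpansion

/-! ### Orders at the cusps -/

section CuspOrder

open Filter Topology Asymptotics

lemma isBoundedAtImInfty_iff_isBigO_one {f : ℍ → ℂ} :
    IsBoundedAtImInfty f ↔ f =O[atImInfty] fun _ => (1 : ℂ) := by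
  rw [← isBigO_norm_right, norm_one]
  rfl

section Width

variable {N : ℕ} {f : ℍ → ℂ}

lemma qpow_eq_qParam_zpow (N : ℕ) (n : ℤ) (τ : ℍ) : qpow N n τ = 𝕢 N τ ^ n := by
  rw [qpow, Function.Periodic.qParam, ← Complex.exp_int_mul]
  push_cast
  ring_nf

lemma periodic_comp_ofComplex_of_T_zpow_smul
    (hT : ∀ τ, f (ModularGroup.T ^ (N : ℤ) • τ) = f τ) :
    Function.Periodic (f ∘ ofComplex) (N : ℝ) := by
  intro z
  have him : (z + (N : ℝ)).im = z.im := by simp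
  rw [Function.comp_apply, Function.comp_apply]
  rcases lt_or_ge 0 z.im with hz | hz
  · rw [ofComplex_apply_of_im_pos hz, ofComplex_apply_of_im_pos (him ▸ hz), ← hT ⟨z, hz⟩]
    congr 1
    ext1
    rw [ModularGroup.coe_T_zpow_smul_eq]
    simp
  · rw [ofComplex_apply_of_im_nonpos hz, ofComplex_apply_of_im_nonpos (him ▸ hz)]

variable [NeZero N]

lemma hasSum_qpow_of_isBigO (hf : MDifferentiable 𝓘(ℂ) 𝓘(ℂ) f)
    (hT : ∀ τ, f (ModularGroup.T ^ (N : ℤ) • τ) = f τ) {n₀ : ℤ}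
    (hO : f =O[atImInfty] fun τ => 𝕢 N τ ^ n₀) :
    ∃ c : ℕ → ℂ, ∀ τ, HasSum (fun n : ℕ => c n * qpow N (n₀ + n) τ) (f τ) := by
  have hN : (0 : ℝ) < N := Nat.cast_pos.mpr (NeZero.pos N)
  have hq (τ : ℍ) : 𝕢 N τ ≠ 0 := Function.Periodic.qParam_ne_zero _
  let F : ℍ → ℂ := fun τ => 𝕢 N τ ^ (-n₀) * f τ
  have hFT (τ : ℍ) : F (ModularGroup.T ^ (N : ℤ) • τ) = F τ := by
    have hqT : 𝕢 N (τ + N) = 𝕢 N τ := by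
      rw [Function.Periodic.qParam, Function.Periodic.qParam, Complex.exp_eq_exp_iff_exists_int]
      exact ⟨1, by
        have hN0 : (N : ℂ) ≠ 0 := Nat.cast_ne_zero.mpr (NeZero.ne N)
        push_cast
        field_simp⟩
    simp only [F, hT, ModularGroup.coe_T_zpow_smul_eq, Int.cast_natCast, hqT]
  have hFbdd : IsBoundedAtImInfty F := by
    refine isBoundedAtImInfty_iff_isBigO_one.mpr
      (((isBigO_refl (fun τ : ℍ => 𝕢 N τ ^ (-n₀)) _).mul hO).congr_right fun τ => ?_)
    rw [← zpow_add₀ (hq τ), neg_add_cancel, zpow_zero]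
  have hsum := UpperHalfPlane.hasSum_qExpansion hN (periodic_comp_ofComplex_of_T_zpow_smul hFT)
    ((mdifferentiable_qParam_zpow N (-n₀)).mul hf) hFbdd
  refine ⟨fun n => (qExpansion N F).coeff n, fun τ => ?_⟩
  have hf_eq : 𝕢 N τ ^ n₀ * F τ = f τ := by
    simp only [F]
    rw [← mul_assoc, ← zpow_add₀ (hq τ), add_neg_cancel, zpow_zero, one_mul]
  refine (hf_eq ▸ (hsum τ).mul_left (𝕢 N τ ^ n₀)).congr_fun fun n => ?_
  rw [qpow_eq_qParam_zpow, zpow_add₀ (hq τ), zpow_natCast, smul_eq_mul]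
  ring

lemma isBigO_qParam_of_hasSum_qpow {n₀ : ℤ} {c : ℕ → ℂ}
    (hf : ∀ τ, HasSum (fun n : ℕ => c n * qpow N (n₀ + n) τ) (f τ)) :
    f =O[atImInfty] fun τ => 𝕢 N τ ^ n₀ := by
  have hq (τ : ℍ) : 𝕢 N τ ≠ 0 := Function.Periodic.qParam_ne_zero _
  have hbdd : IsBoundedAtImInfty fun τ => (𝕢 N τ ^ n₀)⁻¹ * f τ := by
    refine UpperHalfPlane.isBoundedAtImInfty_of_hasSum_qExpansion
      (Nat.cast_pos.mpr (NeZero.pos N)) (c := c) fun τ => ?_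
    refine ((hf τ).mul_left (𝕢 N τ ^ n₀)⁻¹).congr_fun fun n => ?_
    rw [qpow_eq_qParam_zpow, zpow_add₀ (hq τ), zpow_natCast, smul_eq_mul]
    field_simp [zpow_ne_zero n₀ (hq τ)]
  refine ((isBigO_refl (fun τ : ℍ => 𝕢 N τ ^ n₀) atImInfty).mul
    (isBoundedAtImInfty_iff_isBigO_one.mp hbdd)).congr (fun τ => ?_) fun τ => ?_
  · exact mul_inv_cancel_left₀ (zpow_ne_zero _ (hq τ)) _
  · exact mul_one _

lemma isBigO_qParam_of_isZeroAtImInfty (hf : MDifferentiable 𝓘(ℂ) 𝓘(ℂ) f)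
    (hT : ∀ τ, f (ModularGroup.T ^ (N : ℤ) • τ) = f τ) (h0 : IsZeroAtImInfty f) :
    f =O[atImInfty] fun τ => 𝕢 N τ := by
  refine IsBigO.of_norm_right ((h0.exp_decay_atImInfty (Nat.cast_pos.mpr (NeZero.pos N))
    (periodic_comp_ofComplex_of_T_zpow_smul hT) hf h0.isBoundedAtImInfty).congr_right fun τ => ?_)
  rw [Function.Periodic.norm_qParam, UpperHalfPlane.coe_im]

end Width

section Gamma1

variable {N : ℕ}

lemma mul_inv_mem_Gamma1 {γ δ : SL(2, ℤ)} (h0 : ((γ 1 0 : ℤ) : ZMod N) = δ 1 0)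
    (h1 : ((γ 1 1 : ℤ) : ZMod N) = δ 1 1) : γ * δ⁻¹ ∈ Gamma1 N := by
  have hγ : (γ 0 0 : ZMod N) * γ 1 1 - γ 0 1 * γ 1 0 = 1 := by
    exact_mod_cast congrArg (Int.cast : ℤ → ZMod N)
      ((Matrix.det_fin_two _).symm.trans γ.det_coe)
  have hδ : (δ 0 0 : ZMod N) * δ 1 1 - δ 0 1 * δ 1 0 = 1 := by
    exact_mod_cast congrArg (Int.cast : ℤ → ZMod N)
      ((Matrix.det_fin_two _).symm.trans δ.det_coe)
  rw [Gamma1_mem, Matrix.SpecialLinearGroup.coe_mul, Matrix.SpecialLinearGroup.coe_inv,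
    Matrix.adjugate_fin_two]
  simp only [Matrix.mul_apply, Fin.sum_univ_two, Matrix.of_apply, Matrix.cons_val',
    Matrix.cons_val_zero, Matrix.cons_val_one, Matrix.cons_val_fin_one]
  push_cast
  refine ⟨?_, ?_, ?_⟩
  · rw [← h0, ← h1]; linear_combination hγ
  · rw [h0, h1]; linear_combination hδ
  · rw [h0, h1]; ring

lemma conj_T_zpow_mem_Gamma1 (N : ℕ) (γ : SL(2, ℤ)) :
    γ * ModularGroup.T ^ (N : ℤ) * γ⁻¹ ∈ Gamma1 N := by
  refine mul_inv_mem_Gamma1 ?_ ?_ <;>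
  · rw [Matrix.SpecialLinearGroup.coe_mul, ModularGroup.coe_T_zpow]
    simp [Matrix.mul_apply]

lemma smul_T_zpow_smul_of_mem_holInvariant {f : ℍ → ℂ} (hf : f ∈ holInvariant (Gamma1 N))
    (γ : SL(2, ℤ)) (τ : ℍ) : f (γ • ModularGroup.T ^ (N : ℤ) • τ) = f (γ • τ) := by
  rw [← hf.2 _ (conj_T_zpow_mem_Gamma1 N γ) (γ • τ), smul_smul, smul_smul, inv_mul_cancel_right]

end Gamma1

/-- Elements of `SL(2, ℤ)` carrying `∞` to the four cusps `∞`, `2/5`, `0`, `1/2` of `X₁(5)`. -/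
def cuspRep : Fin 4 → SL(2, ℤ) := ![1, twoFifths, ModularGroup.S, twoFifths * ModularGroup.S]

lemma exists_cuspRep_mul_T_zpow (γ : SL(2, ℤ)) :
    ∃ i k, ∃ γ' ∈ Gamma1 5, ∀ τ : ℍ, γ • τ = γ' • cuspRep i • ModularGroup.T ^ (k : ℤ) • τ := by
  have hrow (i : Fin 4) (k : ℤ) : (cuspRep i * ModularGroup.T ^ k) 1 0 = cuspRep i 1 0 ∧
      (cuspRep i * ModularGroup.T ^ k) 1 1 = cuspRep i 1 0 * k + cuspRep i 1 1 := by
    rw [Matrix.SpecialLinearGroup.coe_mul, ModularGroup.coe_T_zpow]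
    simp [Matrix.mul_apply]
  have hcosets : ∀ a b c d : ZMod 5, a * d - b * c = 1 → ∃ (ε : ℤˣ) (i : Fin 4) (k : Fin 5),
      (ε : ℤ) * c = (cuspRep i 1 0 : ℤ) ∧
        (ε : ℤ) * d = (cuspRep i 1 0 : ℤ) * (k : ℤ) + (cuspRep i 1 1 : ℤ) := by
    decide
  have hdet : (γ 0 0 : ZMod 5) * γ 1 1 - γ 0 1 * γ 1 0 = 1 := by
    exact_mod_cast congrArg (Int.cast : ℤ → ZMod 5)
      ((Matrix.det_fin_two _).symm.trans γ.det_coe)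
  obtain ⟨ε, i, k, hc, hd⟩ := hcosets _ _ _ _ hdet
  obtain ⟨δ, hδ, hδ0, hδ1⟩ : ∃ δ : SL(2, ℤ), (∀ τ : ℍ, δ • τ = γ • τ) ∧
      δ 1 0 = ε * γ 1 0 ∧ δ 1 1 = ε * γ 1 1 := by
    rcases Int.units_eq_one_or ε with rfl | rfl
    · exact ⟨γ, fun _ => rfl, by simp, by simp⟩
    · exact ⟨-γ, fun τ => by rw [ModularGroup.SL_neg_smul], by simp, by simp⟩
  refine ⟨i, k, δ * (cuspRep i * ModularGroup.T ^ (k : ℤ))⁻¹, mul_inv_mem_Gamma1 ?_ ?_,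
    fun τ => ?_⟩
  · rw [hδ0, (hrow i k).1]
    exact_mod_cast hc
  · rw [hδ1, (hrow i k).2]
    exact_mod_cast hd
  · rw [smul_smul, smul_smul, mul_assoc, inv_mul_cancel_right, hδ]

/-- `f` vanishes at the cusps `∞`, `2/5`, `0`, `1/2` to the orders `k 0`, …, `k 3` at least, with
poles counted negatively. Orders are measured in `q^{1/5}` at all cusps, although `∞` and `2/5`
have width one. -/
def CuspOrderGE (f : ℍ → ℂ) (k : Fin 4 → ℤ) : Prop :=
  ∀ i, (fun τ => f (cuspRep i • τ)) =O[atImInfty] fun τ => 𝕢 5 τ ^ k i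

lemma isBigO_qParam_zpow {m n : ℤ} (hmn : m ≤ n) :
    (fun τ : ℍ => 𝕢 5 τ ^ n) =O[atImInfty] fun τ => 𝕢 5 τ ^ m :=
  isBigO_of_le _ fun τ => by
    rw [norm_zpow, norm_zpow]
    exact zpow_le_zpow_right_of_le_one₀ (norm_pos_iff.mpr (Function.Periodic.qParam_ne_zero _))
      (Function.Periodic.norm_qParam_lt_one (by norm_num) τ.im_pos).le hmn

lemma tendsto_T_zpow_smul_atImInfty (k : ℤ) :
    Tendsto (fun τ : ℍ => ModularGroup.T ^ k • τ) atImInfty atImInfty := by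
  rw [atImInfty, tendsto_comap_iff]
  exact tendsto_comap.congr fun τ => (ModularGroup.im_T_zpow_smul τ k).symm

namespace CuspOrderGE

variable {f f' : ℍ → ℂ} {k k' : Fin 4 → ℤ}

lemma mono (h : CuspOrderGE f k) (hk : k' ≤ k) : CuspOrderGE f k' :=
  fun i => (h i).trans (isBigO_qParam_zpow (hk i))

lemma const (c : ℂ) : CuspOrderGE (fun _ => c) 0 :=
  fun _ => by simpa using isBigO_const_const c (one_ne_zero (α := ℂ)) _

lemma sub (h : CuspOrderGE f k) (h' : CuspOrderGE f' k) : CuspOrderGE (f - f') k :=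
  fun i => (h i).sub (h' i)

lemma mul (h : CuspOrderGE f k) (h' : CuspOrderGE f' k') : CuspOrderGE (f * f') (k + k') :=
  fun i => ((h i).mul (h' i)).congr_right fun _ =>
    (zpow_add₀ (Function.Periodic.qParam_ne_zero _) _ _).symm

lemma pow (h : CuspOrderGE f k) (n : ℕ) : CuspOrderGE (f ^ n) (n • k) :=
  fun i => ((h i).pow n).congr_right fun _ => by
    rw [← zpow_natCast, ← _root_.zpow_mul, Pi.smul_apply, nsmul_eq_mul, mul_comm]

lemma exists_isBigO_comp_smul (h : CuspOrderGE f k) (hf : f ∈ holInvariant (Gamma1 5))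
    (γ : SL(2, ℤ)) : ∃ i, (fun τ => f (γ • τ)) =O[atImInfty] fun τ => 𝕢 5 τ ^ k i := by
  obtain ⟨i, n, γ', hγ', hγ⟩ := exists_cuspRep_mul_T_zpow γ
  refine ⟨i, (((h i).comp_tendsto (tendsto_T_zpow_smul_atImInfty n)).congr_left
    fun τ => ?_).trans (isBigO_of_le _ fun τ => ?_)⟩
  · rw [hγ, hf.2 γ' hγ', Function.comp_apply]
  · simp only [Function.comp_apply, norm_zpow, Function.Periodic.norm_qParam, UpperHalfPlane.coe_im,
      ModularGroup.im_T_zpow_smul, le_refl]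

lemma exists_eq_const (h : CuspOrderGE f 0) (hf : f ∈ holInvariant (Gamma1 5)) :
    ∃ c, ∀ τ, f τ = c :=
  holInvariant.exists_eq_const hf fun γ => isBoundedAtImInfty_iff_isBigO_one.mpr <| by
    obtain ⟨_, hi⟩ := h.exists_isBigO_comp_smul hf γ
    simpa using hi

end CuspOrderGE

lemma exists_hasSum_ratCast_qpow_iff {f : ℍ → ℂ} :
    (∃ n₀ : ℤ, ∃ c : ℕ → ℚ, ∀ τ, HasSum (fun n : ℕ => (c n : ℂ) * qpow 1 (n₀ + n) τ) (f τ)) ↔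
      ∃ n₀, HasRatQExpansion f n₀ := by
  have hq (τ : ℍ) : 𝕢 1 τ ≠ 0 := Function.Periodic.qParam_ne_zero _
  have hqpow (n₀ : ℤ) (n : ℕ) (τ : ℍ) : qpow 1 (n₀ + n) τ = 𝕢 1 τ ^ n₀ * 𝕢 1 τ ^ n := by
    rw [qpow_eq_qParam_zpow, Nat.cast_one, zpow_add₀ (hq τ), zpow_natCast]
  constructor
  · rintro ⟨n₀, c, hc⟩
    have hsum (τ : ℍ) : HasSum (fun n : ℕ => (c n : ℂ) * 𝕢 1 τ ^ n) ((𝕢 1 τ ^ n₀)⁻¹ * f τ) := by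
      refine ((hc τ).mul_left (𝕢 1 τ ^ n₀)⁻¹).congr_fun fun n => ?_
      rw [hqpow, mul_left_comm, inv_mul_cancel_left₀ (zpow_ne_zero _ (hq τ))]
    refine ⟨n₀, fun q => ∑' n, (c n : ℂ) * q ^ n, ⟨PowerSeries.mk c, fun q hq1 => ?_⟩,
      fun τ => ?_⟩
    · have hsummable : Summable fun n => (c n : ℂ) * q ^ n := by
        rcases eq_or_ne q 0 with rfl | hq0
        · exact summable_of_ne_finset_zero (s := {0}) fun n hn => by
            rw [zero_pow (by simpa using hn), mul_zero]
        · have hτ := hsum ⟨_, Function.Periodic.im_invQParam_pos_of_norm_lt_one one_pos hq1 hq0⟩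
          rw [Function.Periodic.qParam_right_inv one_ne_zero hq0] at hτ
          exact hτ.summable
      simpa using hsummable.hasSum
    · beta_reduce
      rw [(hsum τ).tsum_eq, mul_inv_cancel_left₀ (zpow_ne_zero _ (hq τ))]
  · rintro ⟨n₀, F, ⟨p, hp⟩, hF⟩
    refine ⟨n₀, fun n => PowerSeries.coeff n p, fun τ => hF τ ▸ ?_⟩
    refine ((hp _ (Function.Periodic.norm_qParam_lt_one one_pos τ.im_pos)).mul_left
      (𝕢 1 τ ^ n₀)).congr_fun fun n => ?_
    rw [hqpow, PowerSeries.coeff_map, eq_ratCast, mul_left_comm]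

lemma isWeaklyHolo1_five_iff {f : ℍ → ℂ} :
    IsWeaklyHolo1 5 f ↔
      f ∈ holInvariant (Gamma1 5) ∧ (∃ k, CuspOrderGE f k) ∧ ∃ n₀, HasRatQExpansion f n₀ := by
  rw [IsWeaklyHolo1, exists_hasSum_ratCast_qpow_iff]
  constructor
  · rintro ⟨hhol, hinv, hrat, hcusp⟩
    choose n₀ c hc using hcusp
    exact ⟨⟨hhol, hinv⟩, ⟨fun i => n₀ (cuspRep i), fun i =>
      isBigO_qParam_of_hasSum_qpow (hc (cuspRep i))⟩, hrat⟩
  · rintro ⟨hf, ⟨k, hk⟩, hrat⟩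
    refine ⟨hf.1, hf.2, hrat, fun γ => ?_⟩
    obtain ⟨i, hi⟩ := hk.exists_isBigO_comp_smul hf γ
    exact ⟨k i, hasSum_qpow_of_isBigO (holInvariant.mdifferentiable_comp_smul hf γ)
      (smul_T_zpow_smul_of_mem_holInvariant hf γ) hi⟩

end CuspOrder

section CuspZero

open Filter Topology

lemma tendsto_hdiv_atImInfty (N : ℕ) [NeZero N] : Tendsto (hdiv N) atImInfty atImInfty := by
  have him (τ : ℍ) : (hdiv N τ).im = τ.im / N := by
    rw [← UpperHalfPlane.coe_im, hdiv_coe, Complex.div_natCast_im, UpperHalfPlane.coe_im]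
  refine tendsto_comap_iff.mpr (Tendsto.congr (fun τ => (him τ).symm) ?_)
  exact tendsto_comap.atTop_div_const (by exact_mod_cast NeZero.pos N)

lemma tendsto_tsum_zpow_triangular {w : ℂ} (hw : w ≠ 0) :
    Tendsto (fun q : ℂ => ∑' n : ℤ, q ^ (n * (n - 1) / 2) * (-w) ^ n) (𝓝 0) (𝓝 (1 - w)) := by
  have hnonneg (n : ℤ) : 0 ≤ n * (n - 1) / 2 := by
    have : 0 ≤ n * (n - 1) := by rcases le_or_gt n 0 with hn | hn <;> nlinarith
    omega
  have hzero : ∑' n : ℤ, (0 : ℂ) ^ (n * (n - 1) / 2) * (-w) ^ n = 1 - w := by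
    rw [tsum_eq_sum (s := {0, 1}) fun n hn => ?_]
    · simp [sub_eq_add_neg]
    · simp only [Finset.mem_insert, Finset.mem_singleton, not_or] at hn
      have hpos : n * (n - 1) / 2 ≠ 0 := fun h => by
        have htri := two_mul_triangular n
        rw [h, mul_zero, eq_comm, mul_eq_zero] at htri
        omega
      rw [_root_.zero_zpow _ hpos, zero_mul]
  rw [← hzero]
  have hsummable := (summable_zpow_triangular_mul_neg_zpow (q := 1 / 2) (by norm_num)
    (by norm_num) hw).norm
  refine tendsto_tsum_of_dominated_convergence hsummable (fun n => ?_) ?_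
  · exact (continuousAt_zpow₀ 0 _ (Or.inr (hnonneg n))).tendsto.mul_const _
  · filter_upwards [Metric.ball_mem_nhds (0 : ℂ) one_half_pos] with q hq n
    have hq' : ‖q‖ ≤ ‖(1 / 2 : ℂ)‖ := by
      rw [mem_ball_zero_iff] at hq
      simpa using hq.le
    simp only [norm_mul, norm_zpow]
    gcongr
    exact zpow_le_zpow_left₀ (hnonneg n) (norm_nonneg q) hq'

lemma tendsto_klein_div_klein {x y : ℂ} (hy : cexp (2 * π * Complex.I * y) ≠ 1) :
    Tendsto (fun τ : ℍ => klein 0 x τ / klein 0 y τ) atImInfty (𝓝 (cexp (π * Complex.I * (y - x)) *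
      ((1 - cexp (2 * π * Complex.I * x)) / (1 - cexp (2 * π * Complex.I * y))))) := by
  have hlim (z : ℂ) := (tendsto_tsum_zpow_triangular (Complex.exp_ne_zero
    (2 * π * Complex.I * z))).comp (UpperHalfPlane.qParam_tendsto_atImInfty one_pos)
  refine (((hlim x).div (hlim y) (sub_ne_zero.mpr hy.symm)).const_mul _).congr fun τ => ?_
  rw [klein_eq_tsum_zpow_triangular, klein_eq_tsum_zpow_triangular, mul_div_mul_comm,
    ← Complex.exp_sub]
  simp only [Function.comp_apply, Pi.div_apply, zero_mul, zero_add, Function.Periodic.qParam,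
    Complex.ofReal_one, div_one]
  ring_nf

lemma goldenRatio_pow_five_quadratic :
    (Real.goldenRatio ^ 5) ^ 2 - 11 * Real.goldenRatio ^ 5 - 1 = 0 := by
  linear_combination
    (Real.goldenRatio ^ 8 + Real.goldenRatio ^ 7 + 2 * Real.goldenRatio ^ 6 +
      3 * Real.goldenRatio ^ 5 + 5 * Real.goldenRatio ^ 4 - 3 * Real.goldenRatio ^ 3 +
      2 * Real.goldenRatio ^ 2 - Real.goldenRatio + 1) * Real.goldenRatio_sq

lemma exp_pi_div_five_add_exp_neg :
    cexp (π * Complex.I / 5) + cexp (-(π * Complex.I / 5)) = Real.goldenRatio := by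
  have hcos := Complex.two_cos (π / 5)
  rw [← Complex.ofReal_ofNat 5, ← Complex.ofReal_div, ← Complex.ofReal_cos,
    Real.cos_pi_div_five] at hcos
  rw [Real.goldenRatio]
  push_cast at hcos ⊢
  ring_nf at hcos ⊢
  exact hcos.symm

lemma tendsto_gOne5_S_smul : Tendsto (fun τ : ℍ => gOne5 (ModularGroup.S • τ)) atImInfty
    (𝓝 (Real.goldenRatio ^ 5 : ℝ)) := by
  set z := cexp (π * Complex.I / 5) with hz
  have hz0 : z ≠ 0 := Complex.exp_ne_zero _
  have hw : cexp (2 * π * Complex.I * (1 / 5)) = z ^ 2 := by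
    rw [hz, ← Complex.exp_nat_mul]; ring_nf
  have hw' : cexp (2 * π * Complex.I * (2 / 5)) = z ^ 4 := by
    rw [hz, ← Complex.exp_nat_mul]; ring_nf
  have hw1 : cexp (2 * π * Complex.I * (1 / 5)) ≠ 1 := by
    rw [mul_one_div]
    exact (Complex.isPrimitiveRoot_exp 5 (by norm_num)).ne_one (by norm_num)
  have hlim := ((tendsto_klein_div_klein (x := 2 / 5) hw1).comp (tendsto_hdiv_atImInfty 5)).pow 5
  have hφ : Real.goldenRatio = z⁻¹ * ((1 - z ^ 4) / (1 - z ^ 2)) := by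
    rw [hw] at hw1
    have := sub_ne_zero.mpr hw1.symm
    rw [← exp_pi_div_five_add_exp_neg, Complex.exp_neg, ← hz]
    field_simp
    ring
  rw [hw, hw', show π * Complex.I * (1 / 5 - 2 / 5) = -(π * Complex.I / 5) by ring,
    Complex.exp_neg, ← hz, ← hφ, ← Complex.ofReal_pow] at hlim
  exact hlim.congr fun τ => (gOne5_S_smul τ).symm

end CuspZero

/-! ### Divisors of the generators -/

section Divisors

open Filter Topology Asymptotics

lemma CuspOrderGE.of_isBigO {f : ℍ → ℂ} {k₀ k₁ k₂ k₃ : ℤ}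
    (h₀ : f =O[atImInfty] fun τ => 𝕢 5 τ ^ k₀)
    (h₁ : (fun τ => f (twoFifths • τ)) =O[atImInfty] fun τ => 𝕢 5 τ ^ k₁)
    (h₂ : (fun τ => f (ModularGroup.S • τ)) =O[atImInfty] fun τ => 𝕢 5 τ ^ k₂)
    (h₃ : (fun τ => f (twoFifths • ModularGroup.S • τ)) =O[atImInfty] fun τ => 𝕢 5 τ ^ k₃) :
    CuspOrderGE f ![k₀, k₁, k₂, k₃] := by
  intro i
  fin_cases i
  · simpa [cuspRep] using h₀
  · simpa [cuspRep] using h₁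
  · simpa [cuspRep] using h₂
  · simpa [cuspRep, mul_smul] using h₃

lemma gOne5_S_smul_isBigO :
    (fun τ : ℍ => gOne5 (ModularGroup.S • τ)) =O[atImInfty] fun τ => 𝕢 5 τ ^ (0 : ℤ) := by
  simpa only [zpow_zero] using tendsto_gOne5_S_smul.isBigO_one ℂ

lemma gOne5_S_smul_inv_isBigO :
    (fun τ : ℍ => (gOne5 (ModularGroup.S • τ))⁻¹) =O[atImInfty] fun τ => 𝕢 5 τ ^ (0 : ℤ) := by
  have hφ : ((Real.goldenRatio ^ 5 : ℝ) : ℂ) ≠ 0 :=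
    Complex.ofReal_ne_zero.mpr (pow_ne_zero 5 Real.goldenRatio_ne_zero)
  simpa only [zpow_zero] using (tendsto_gOne5_S_smul.inv₀ hφ).isBigO_one ℂ

lemma cuspOrderGE_gOne5 : CuspOrderGE gOne5 ![-5, 5, 0, 0] := by
  refine CuspOrderGE.of_isBigO hasRatQExpansion_gOne5.isBigO ?_ gOne5_S_smul_isBigO ?_ <;>
    simp only [gOne5_twoFifths_smul]
  · exact hasRatQExpansion_gOne5_inv.isBigO.neg_left
  · exact gOne5_S_smul_inv_isBigO.neg_left

lemma cuspOrderGE_gOne5_inv : CuspOrderGE gOne5⁻¹ ![5, -5, 0, 0] := by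
  refine CuspOrderGE.of_isBigO hasRatQExpansion_gOne5_inv.isBigO ?_ gOne5_S_smul_inv_isBigO ?_ <;>
    simp only [Pi.inv_apply, gOne5_twoFifths_smul, inv_neg, inv_inv]
  · exact hasRatQExpansion_gOne5.isBigO.neg_left
  · exact gOne5_S_smul_isBigO.neg_left

lemma gQuad_S_smul_isBigO :
    (fun τ : ℍ => gQuad (ModularGroup.S • τ)) =O[atImInfty] fun τ => 𝕢 5 τ ^ (1 : ℤ) := by
  have hzero : IsZeroAtImInfty fun τ : ℍ => gQuad (ModularGroup.S • τ) := by
    have hlim := ((tendsto_gOne5_S_smul.pow 2).sub (tendsto_gOne5_S_smul.const_mul 11)).sub_const 1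
    have hφ : (((Real.goldenRatio ^ 5 : ℝ) : ℂ) ^ 2 - 11 * (Real.goldenRatio ^ 5 : ℝ) - 1) = 0 := by
      exact_mod_cast goldenRatio_pow_five_quadratic
    rwa [hφ] at hlim
  simpa only [zpow_one, Nat.cast_ofNat] using isBigO_qParam_of_isZeroAtImInfty (N := 5)
    (holInvariant.mdifferentiable_comp_smul gQuad_mem_holInvariant _)
    (smul_T_zpow_smul_of_mem_holInvariant gQuad_mem_holInvariant _) hzero

lemma cuspOrderGE_gQuad : CuspOrderGE gQuad ![-10, 0, 1, 1] := by
  refine CuspOrderGE.of_isBigO hasRatQExpansion_gQuad.isBigO ?_ gQuad_S_smul_isBigO ?_ <;>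
    simp only [gQuad_twoFifths_smul]
  · refine (hasRatQExpansion_gQuad.isBigO.mul
      (hasRatQExpansion_gOne5_inv.isBigO.pow 2)).neg_left.congr_right fun τ => ?_
    rw [← zpow_natCast, ← _root_.zpow_mul, ← zpow_add₀ (Function.Periodic.qParam_ne_zero _)]
    rfl
  · refine (gQuad_S_smul_isBigO.mul (gOne5_S_smul_inv_isBigO.pow 2)).neg_left.congr_right
      fun τ => ?_
    rw [zpow_zero, one_pow, mul_one]

end Divisors

section Nonvanishing

open Filter Topology Asymptotics

lemma discriminant_isEquivalent_qParam :
    ModularForm.discriminant ~[atImInfty] fun τ : ℍ => 𝕢 1 τ :=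
  isEquivalent_of_tendsto_one <|
    ModularForm.tendsto_atImInfty_tprod_one_sub_eta_q_pow.congr fun τ => by
      rw [Pi.div_apply, ModularForm.discriminant_eq_q_prod,
        mul_div_cancel_left₀ _ (Function.Periodic.qParam_ne_zero _)]

lemma discriminant_smul (γ : SL(2, ℤ)) (τ : ℍ) : ModularForm.discriminant (γ • τ) =
    denom γ τ ^ (12 : ℤ) * ModularForm.discriminant τ := by
  have hslash := congrFun (SlashInvariantForm.slash_action_generators_SL2Z
    ModularForm.discriminant_S_invariant ModularForm.discriminant_T_invariant γ) τ
  rw [ModularForm.SL_slash_apply] at hslash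
  rw [← hslash, mul_comm, mul_assoc, ← zpow_add₀ (UpperHalfPlane.denom_ne_zero _ _),
    neg_add_cancel, zpow_zero, mul_one]

/-- The modular unit `Δ(5τ) / Δ(τ)`. It has no zeros or poles on `ℍ` and is used to cancel the
zeros and poles of `gQuad / gOne5` at the cusps. -/
def discRatio (τ : ℍ) : ℂ := ModularForm.discriminant (hsmul 5 τ) / ModularForm.discriminant τ

lemma discRatio_ne_zero (τ : ℍ) : discRatio τ ≠ 0 :=
  div_ne_zero (ModularForm.discriminant_ne_zero _) (ModularForm.discriminant_ne_zero _)

lemma discRatio_smul {γ : SL(2, ℤ)} (hc : 5 ∣ γ 1 0) (τ : ℍ) :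
    discRatio (γ • τ) = discRatio τ := by
  obtain ⟨γ', -, -, h10, h11, h⟩ := exists_hsmul_smul (N := 5) (by norm_num) γ hc
  have hdenom : denom γ' (hsmul 5 τ) = denom γ τ := by
    rw [ModularGroup.denom_apply, ModularGroup.denom_apply, ← h10, h11, hsmul_coe (by norm_num)]
    push_cast
    ring
  rw [discRatio, discRatio, h, discriminant_smul, discriminant_smul, hdenom,
    mul_div_mul_left _ _ (zpow_ne_zero 12 (UpperHalfPlane.denom_ne_zero _ τ))]

lemma discRatio_S_smul (τ : ℍ) : discRatio (ModularGroup.S • τ) =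
    (5 ^ 12)⁻¹ * (ModularForm.discriminant (hdiv 5 τ) / ModularForm.discriminant τ) := by
  have hdenom (z : ℍ) : denom ModularGroup.S z = z := by
    rw [ModularGroup.denom_apply, ModularGroup.coe_S]
    simp
  have hτ := τ.ne_zero
  rw [discRatio, hsmul_S_smul, discriminant_smul, discriminant_smul, hdenom, hdenom, hdiv_coe,
    div_zpow, Nat.cast_ofNat, div_mul_eq_mul_div, div_div, mul_comm (5 ^ (12 : ℤ) : ℂ),
    ← div_div, mul_div_mul_left _ _ (zpow_ne_zero 12 hτ), div_eq_inv_mul]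
  norm_cast

lemma hsmul_im {N : ℕ} (hN : 0 < N) (τ : ℍ) : (hsmul N τ).im = N * τ.im := by
  rw [← UpperHalfPlane.coe_im, hsmul_coe hN, ← nsmul_eq_mul, Complex.im_nsmul, nsmul_eq_mul,
    UpperHalfPlane.coe_im]

lemma mdifferentiable_comp_hsmul {f : ℍ → ℂ} (hf : MDifferentiable 𝓘(ℂ) 𝓘(ℂ) f) {N : ℕ}
    (hN : 0 < N) : MDifferentiable 𝓘(ℂ) 𝓘(ℂ) fun τ => f (hsmul N τ) := by
  rw [UpperHalfPlane.mdifferentiable_iff] at hf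
  have him {z : ℂ} (hz : 0 < z.im) : 0 < (N * z).im := by
    rw [← nsmul_eq_mul, Complex.im_nsmul]; positivity
  have hcomp : DifferentiableOn ℂ (fun z : ℂ => (f ∘ ofComplex) (N * z)) {z | 0 < z.im} :=
    hf.comp (by fun_prop) fun _ => him
  refine (funext fun τ => ?_ : (fun τ => f (hsmul N τ)) = _) ▸ mdifferentiable_comp_coe hcomp
  rw [Function.comp_apply, ofComplex_apply_of_im_pos (him τ.im_pos)]
  congr 1
  ext1
  exact hsmul_coe hN τ

lemma discRatio_mem_holInvariant : discRatio ∈ holInvariant (Gamma1 5) := by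
  have hΔ : MDifferentiable 𝓘(ℂ) 𝓘(ℂ) ModularForm.discriminant := CuspForm.discriminant.holo'
  refine ⟨?_, fun γ hγ => discRatio_smul ?_⟩
  · rw [show discRatio = _ * ModularForm.discriminant⁻¹ from funext fun _ => div_eq_mul_inv _ _]
    exact (mdifferentiable_comp_hsmul hΔ (by norm_num)).mul
      (mdifferentiable_inv hΔ ModularForm.discriminant_ne_zero)
  · exact_mod_cast (ZMod.intCast_zmod_eq_zero_iff_dvd _ 5).mp ((Gamma1_mem 5 γ).mp hγ).2.2

lemma tendsto_hsmul_atImInfty {N : ℕ} (hN : 0 < N) : Tendsto (hsmul N) atImInfty atImInfty := by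
  refine tendsto_comap_iff.mpr (Tendsto.congr (fun τ => (hsmul_im hN τ).symm) ?_)
  exact tendsto_comap.const_mul_atTop (by exact_mod_cast hN)

lemma discRatio_isBigO : discRatio =O[atImInfty] fun τ => 𝕢 5 τ ^ (20 : ℤ) := by
  have hΔ5 := discriminant_isEquivalent_qParam.isBigO.comp_tendsto
    (tendsto_hsmul_atImInfty (N := 5) (by norm_num))
  refine (hΔ5.mul discriminant_isEquivalent_qParam.inv.isBigO).congr (fun τ => ?_) fun τ => ?_
  · rw [discRatio, Function.comp_apply, Pi.inv_apply, div_eq_mul_inv]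
  · rw [Function.comp_apply, Pi.inv_apply, hsmul_coe (by norm_num)]
    simp only [Function.Periodic.qParam, ← Complex.exp_neg, ← Complex.exp_add,
      ← Complex.exp_int_mul]
    push_cast
    ring_nf

lemma discRatio_S_smul_isBigO :
    (fun τ : ℍ => discRatio (ModularGroup.S • τ)) =O[atImInfty] fun τ => 𝕢 5 τ ^ (-4 : ℤ) := by
  have hΔdiv := discriminant_isEquivalent_qParam.isBigO.comp_tendsto (tendsto_hdiv_atImInfty 5)
  refine ((hΔdiv.mul discriminant_isEquivalent_qParam.inv.isBigO).const_mul_left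
    (5 ^ 12)⁻¹).congr (fun τ => ?_) fun τ => ?_
  · rw [discRatio_S_smul, Function.comp_apply, Pi.inv_apply, div_eq_mul_inv]
  · rw [Function.comp_apply, Pi.inv_apply, hdiv_coe]
    simp only [Function.Periodic.qParam, ← Complex.exp_neg, ← Complex.exp_add,
      ← Complex.exp_int_mul]
    push_cast
    ring_nf

lemma cuspOrderGE_discRatio : CuspOrderGE discRatio ![20, 20, -4, -4] := by
  have htwoFifths (τ : ℍ) : discRatio (twoFifths • τ) = discRatio τ := discRatio_smul ⟨1, rfl⟩ τ
  refine CuspOrderGE.of_isBigO discRatio_isBigO ?_ discRatio_S_smul_isBigO ?_ <;>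
    simp only [htwoFifths]
  · exact discRatio_isBigO
  · exact discRatio_S_smul_isBigO

lemma gQuad_div_gOne5_pow_mul_discRatio_eq_const :
    ∃ c, c ≠ 0 ∧ ∀ τ, (gQuad τ * (gOne5 τ)⁻¹) ^ 4 * discRatio τ = c := by
  have hmem : (gQuad * gOne5⁻¹) ^ 4 * discRatio ∈ holInvariant (Gamma1 5) :=
    mul_mem (pow_mem (mul_mem gQuad_mem_holInvariant
      (holInvariant.inv_mem gOne5_mem_holInvariant gOne5_ne_zero)) 4) discRatio_mem_holInvariant
  have horder := ((cuspOrderGE_gQuad.mul cuspOrderGE_gOne5_inv).pow 4).mul cuspOrderGE_discRatio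
  obtain ⟨c, hc⟩ := (horder.mono (by rw [Pi.le_def]; decide)).exists_eq_const hmem
  refine ⟨c, ?_, hc⟩
  rintro rfl
  have hgQuad (τ : ℍ) : gQuadSeries (𝕢 1 τ) = 0 := by
    have hzero : (gQuad τ * (gOne5 τ)⁻¹) ^ 4 * discRatio τ = 0 := hc τ
    simpa [discRatio_ne_zero, gOne5_ne_zero, gQuad_eq_gQuadSeries,
      Function.Periodic.qParam_ne_zero] using hzero
  have hlim := tendsto_comp_qParam gQuadSeries_mem_ratPowerSeries
  simp only [hgQuad, gQuadSeries_zero] at hlim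
  exact zero_ne_one (tendsto_nhds_unique tendsto_const_nhds hlim)

lemma gQuad_ne_zero (τ : ℍ) : gQuad τ ≠ 0 := by
  obtain ⟨c, hc0, hc⟩ := gQuad_div_gOne5_pow_mul_discRatio_eq_const
  intro h
  exact hc0 (by rw [← hc τ, h]; ring)

lemma cuspOrderGE_gQuad_inv : CuspOrderGE gQuad⁻¹ ![10, 0, -1, -1] := by
  obtain ⟨c, hc0, hc⟩ := gQuad_div_gOne5_pow_mul_discRatio_eq_const
  have hinv : gQuad⁻¹ =
      (fun _ => c⁻¹) * (gQuad ^ 3 * gOne5⁻¹ ^ 4 * discRatio) := by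
    ext τ
    refine inv_eq_of_mul_eq_one_right ?_
    calc gQuad τ * (c⁻¹ * (gQuad τ ^ 3 * (gOne5 τ)⁻¹ ^ 4 * discRatio τ))
        = c⁻¹ * ((gQuad τ * (gOne5 τ)⁻¹) ^ 4 * discRatio τ) := by ring
      _ = 1 := by rw [hc, inv_mul_cancel₀ hc0]
  have horder := (CuspOrderGE.const c⁻¹).mul
    (((cuspOrderGE_gQuad.pow 3).mul (cuspOrderGE_gOne5_inv.pow 4)).mul cuspOrderGE_discRatio)
  rw [hinv]
  exact horder.mono (by rw [Pi.le_def]; decide)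

lemma gQuadSeries_ne_zero {q : ℂ} (hq : ‖q‖ < 1) : gQuadSeries q ≠ 0 := by
  rcases eq_or_ne q 0 with rfl | hq0
  · rw [gQuadSeries_zero]
    exact one_ne_zero
  · let τ : ℍ := ⟨_, Function.Periodic.im_invQParam_pos_of_norm_lt_one one_pos hq hq0⟩
    have hτ : 𝕢 1 τ = q := Function.Periodic.qParam_right_inv one_ne_zero hq0
    have hu := gQuad_ne_zero τ
    rw [gQuad_eq_gQuadSeries, hτ] at hu
    exact right_ne_zero_of_mul hu

lemma hasRatQExpansion_gQuad_inv : HasRatQExpansion gQuad⁻¹ 2 :=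
  HasRatQExpansion.inv gQuadSeries_mem_ratPowerSeries (fun _ => gQuadSeries_ne_zero)
    gQuad_eq_gQuadSeries

end Nonvanishing

/-! ### Generators of the ring -/

section Generators

lemma isWeaklyHolo1_gOne5 : IsWeaklyHolo1 5 gOne5 :=
  isWeaklyHolo1_five_iff.mpr
    ⟨gOne5_mem_holInvariant, ⟨_, cuspOrderGE_gOne5⟩, _, hasRatQExpansion_gOne5⟩

lemma isWeaklyHolo1_gOne5_inv : IsWeaklyHolo1 5 gOne5⁻¹ :=
  isWeaklyHolo1_five_iff.mpr ⟨holInvariant.inv_mem gOne5_mem_holInvariant gOne5_ne_zero,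
    ⟨_, cuspOrderGE_gOne5_inv⟩, _, hasRatQExpansion_gOne5_inv⟩

lemma isWeaklyHolo1_gQuad_inv : IsWeaklyHolo1 5 gQuad⁻¹ :=
  isWeaklyHolo1_five_iff.mpr ⟨holInvariant.inv_mem gQuad_mem_holInvariant gQuad_ne_zero,
    ⟨_, cuspOrderGE_gQuad_inv⟩, _, hasRatQExpansion_gQuad_inv⟩

lemma HasRatQExpansion.cuspOrderGE {f : ℍ → ℂ} {n k₀ k₁ k₂ k₃ : ℤ} (hf : HasRatQExpansion f n)
    (hk : CuspOrderGE f ![k₀, k₁, k₂, k₃]) : CuspOrderGE f ![5 * n, k₁, k₂, k₃] := by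
  intro i
  cases i using Fin.cases with
  | zero => simpa [cuspRep] using hf.isBigO
  | succ i => exact hk i.succ

lemma HasRatQExpansion.exists_sub_gOne5_pow {f : ℍ → ℂ} {n : ℕ}
    (hf : HasRatQExpansion f (-(n + 1 : ℕ))) :
    ∃ c : ℚ, HasRatQExpansion (f - algebraMap ℚ (ℍ → ℂ) c * gOne5 ^ (n + 1)) (-n) := by
  obtain ⟨F, hF, hfF⟩ := hf
  obtain ⟨c, hc⟩ := ratPowerSeries.exists_apply_zero hF
  obtain ⟨G, hG, hFG⟩ := ratPowerSeries.exists_eq_mul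
    (sub_mem hF (mul_mem (algebraMap_mem _ c) (pow_mem gSeries_mem_ratPowerSeries (n + 1))))
    (by simp [hc, gSeries_zero])
  refine ⟨c, G, hG, fun τ => ?_⟩
  have hq : 𝕢 1 τ ≠ 0 := Function.Periodic.qParam_ne_zero _
  have hFGτ := hFG _ (Function.Periodic.norm_qParam_lt_one one_pos τ.im_pos)
  calc f τ - c * gOne5 τ ^ (n + 1)
      = 𝕢 1 τ ^ (-(n + 1 : ℕ) : ℤ) * (F (𝕢 1 τ) - c * gSeries (𝕢 1 τ) ^ (n + 1)) := by
        rw [hfF, gOne5_eq_gSeries, mul_pow, ← zpow_natCast (𝕢 1 τ ^ (-1 : ℤ)), ← _root_.zpow_mul,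
          neg_one_mul]
        ring
    _ = 𝕢 1 τ ^ (-(n + 1 : ℕ) : ℤ) * 𝕢 1 τ * G (𝕢 1 τ) := by
        rw [mul_assoc, ← hFGτ]
        rfl
    _ = 𝕢 1 τ ^ (-n : ℤ) * G (𝕢 1 τ) := by
        rw [← zpow_add_one₀ hq]
        congr 2
        push_cast
        ring

lemma HasRatQExpansion.exists_eq_ratCast {f : ℍ → ℂ} (hf : HasRatQExpansion f 0) {c : ℂ}
    (hc : ∀ τ, f τ = c) : ∃ r : ℚ, c = r := by
  obtain ⟨F, hF, hfF⟩ := hf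
  obtain ⟨r, hr⟩ := ratPowerSeries.exists_apply_zero hF
  refine ⟨r, tendsto_nhds_unique (tendsto_const_nhds (f := atImInfty)) ?_⟩
  exact hr ▸ (tendsto_comp_qParam hF).congr fun τ => by rw [← hc τ, hfF, zpow_zero, one_mul]

lemma exists_eq_aeval_gOne5 (n : ℕ) {f : ℍ → ℂ} {k₀ : ℤ} (hf : f ∈ holInvariant (Gamma1 5))
    (hk : CuspOrderGE f ![k₀, 0, 0, 0]) (hq : HasRatQExpansion f (-n)) :
    ∃ p : Polynomial ℚ, f = Polynomial.aeval gOne5 p := by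
  induction n generalizing f k₀ with
  | zero =>
    rw [Nat.cast_zero, neg_zero] at hq
    have h0 : (0 : Fin 4 → ℤ) ≤ ![5 * 0, 0, 0, 0] := by rw [Pi.le_def]; decide
    obtain ⟨c, hc⟩ := ((hq.cuspOrderGE hk).mono h0).exists_eq_const hf
    obtain ⟨r, rfl⟩ := hq.exists_eq_ratCast hc
    exact ⟨Polynomial.C r, funext fun τ => by rw [hc τ, Polynomial.aeval_C]; rfl⟩
  | succ n ih =>
    obtain ⟨c, hc⟩ := hq.exists_sub_gOne5_pow
    have hmem : f - algebraMap ℚ (ℍ → ℂ) c * gOne5 ^ (n + 1) ∈ holInvariant (Gamma1 5) :=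
      sub_mem hf (mul_mem (algebraMap_mem _ (c : ℂ)) (pow_mem gOne5_mem_holInvariant (n + 1)))
    have hle : ![5 * -((n + 1 : ℕ) : ℤ), 0, 0, 0] ≤ 0 + (n + 1) • ![-5, 5, 0, 0] := fun i => by
      fin_cases i <;>
        simp only [Fin.zero_eta, Fin.mk_one, Fin.reduceFinMk, Pi.add_apply, Pi.smul_apply,
          Pi.zero_apply, Int.nsmul_eq_mul, Matrix.cons_val] <;>
        omega
    have horder := (hq.cuspOrderGE hk).sub
      (((CuspOrderGE.const (c : ℂ)).mul (cuspOrderGE_gOne5.pow (n + 1))).mono hle)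
    obtain ⟨p, hp⟩ := ih hmem horder hc
    refine ⟨p + Polynomial.C c * Polynomial.X ^ (n + 1), ?_⟩
    rw [map_add, ← hp, map_mul, map_pow, Polynomial.aeval_C, Polynomial.aeval_X, sub_add_cancel]

lemma IsWeaklyHolo1.exists_eq_aeval_mul {h : ℍ → ℂ} (hh : IsWeaklyHolo1 5 h) :
    ∃ (p : Polynomial ℚ) (m : ℕ), h = Polynomial.aeval gOne5 p * (gQuad⁻¹ * gOne5⁻¹) ^ m := by
  obtain ⟨hmem, ⟨k, hk⟩, n₀, hq⟩ := isWeaklyHolo1_five_iff.mp hh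
  obtain ⟨m, hm⟩ : ∃ m : ℕ, ∀ i, -(m : ℤ) ≤ k i :=
    ⟨∑ i, (k i).natAbs, fun i => by
      have := Finset.single_le_sum (f := fun i => (k i).natAbs) (fun _ _ => Nat.zero_le _)
        (Finset.mem_univ i)
      omega⟩
  set n := (3 * m - n₀).toNat
  have horder : CuspOrderGE (h * (gQuad * gOne5) ^ m) ![-16 * m, 0, 0, 0] := by
    refine (hk.mul ((cuspOrderGE_gQuad.mul cuspOrderGE_gOne5).pow m)).mono fun i => ?_
    have := hm i
    fin_cases i <;>
      simp only [Fin.zero_eta, Fin.mk_one, Fin.reduceFinMk, Pi.add_apply, Pi.smul_apply,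
        Int.nsmul_eq_mul, Matrix.cons_val] at this ⊢ <;>
      omega
  have hexp : HasRatQExpansion (h * (gQuad * gOne5) ^ m) (-n) :=
    (hq.mul ((hasRatQExpansion_gQuad.mul hasRatQExpansion_gOne5).pow m)).mono (by omega)
  obtain ⟨p, hp⟩ := exists_eq_aeval_gOne5 n (mul_mem hmem
    (pow_mem (mul_mem gQuad_mem_holInvariant gOne5_mem_holInvariant) m)) horder hexp
  refine ⟨p, m, ?_⟩
  have hunit : gQuad * gOne5 * (gQuad⁻¹ * gOne5⁻¹) = 1 := by
    ext τ
    have hu := gQuad_ne_zero τ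
    have hg := gOne5_ne_zero τ
    simp only [Pi.mul_apply, Pi.inv_apply, Pi.one_apply]
    field_simp
  rw [← hp, mul_assoc, ← mul_pow, hunit, one_pow, mul_one]

end Generators

/-- `O_{1,5}(ℚ) = ℚ[g_{1,5}, g_{1,5}⁻¹, (g_{1,5}² - 11g_{1,5} - 1)⁻¹]`. -/
theorem statement15 :
    IsWeaklyHolo1 5 gOne5 ∧
    IsWeaklyHolo1 5 (fun τ => (gOne5 τ)⁻¹) ∧
    IsWeaklyHolo1 5 (fun τ => (gOne5 τ ^ 2 - 11 * gOne5 τ - 1)⁻¹) ∧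
    (∀ h : ℍ → ℂ, IsWeaklyHolo1 5 h →
      ∃ P : MvPolynomial (Fin 3) ℚ, ∀ τ : ℍ,
        h τ = MvPolynomial.aeval
          ![gOne5 τ, (gOne5 τ)⁻¹, (gOne5 τ ^ 2 - 11 * gOne5 τ - 1)⁻¹] P) := by
  refine ⟨isWeaklyHolo1_gOne5, isWeaklyHolo1_gOne5_inv, isWeaklyHolo1_gQuad_inv, fun h hh => ?_⟩
  obtain ⟨p, m, rfl⟩ := hh.exists_eq_aeval_mul
  refine ⟨Polynomial.aeval (MvPolynomial.X 0) p * (MvPolynomial.X 2 * MvPolynomial.X 1) ^ m,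
    fun τ => ?_⟩
  rw [map_mul, ← Polynomial.aeval_algHom_apply, Pi.mul_apply, Polynomial.aeval_pi_apply₂]
  simp [gQuad]
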